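/- arXiv:1806.04901 — 5 statements merged into one kernel-verified Lean document; each statement's English description precedes it below -/
import Mathlib

section
/- Let 1 ≤ p < ∞ and let ρ ∈ C¹(ℝ^N ∖ {0}) be positive with H(∇ρ(x)) = 1 for all x ≠ 0. Assume Δ_H ρ ≥ C/ρ in the distributional sense on ℝ^N ∖ {0} for some constant C > 0, i.e. −∫ (∇_ξ H)(∇ρ(x)) · ∇φ(x) dx ≥ ∫ (C/ρ(x)) φ(x) dx for every nonnegative φ ∈ C_c^∞(ℝ^N ∖ {0}). Then for every real α with C + α > −1 and every u ∈ C_c^∞(ℝ^N ∖ {0}), ((C + α + 1)/p)^p · ∫_{ℝ^N} ρ(x)^α |u(x)|^p dx ≤ ∫_{ℝ^N} ρ(x)^{α+p} |(∇_ξ H)(∇ρ(x)) · ∇u(x)|^p dx. -/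
/-!
Write `b x = (∇_ξ H)(∇ρ x)`. This field is continuous off the origin, because `H(∇ρ) = 1` keeps
`∇ρ` away from `0`, and Euler's identity for `H` gives `b · ∇ρ = H(∇ρ) = 1`
(`IsFinslerNorm.fderiv_apply_self`).

Testing `div b ≥ C / ρ` with `φ = ρ^{a+1} |u|^p` yields
`C ∫ ρ^a |u|^p ≤ -(a+1) ∫ ρ^a |u|^p - p ∫ ρ^{a+1} |u|^{p-2} u (b · ∇u)`, hence
`k ∫ ρ^a |u|^p ≤ ∫ ρ^{a+1} |u|^{p-1} |b · ∇u|` with `k = (C + a + 1) / p > 0` (`limit_ineq`).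
Young's inequality with `t = |u|` and `s = ρ |b · ∇u| / k`,
`t^{p-1} s ≤ (1 - 1/p) t^p + s^p / p`, then absorbs the right-hand side and gives the claim with
the constant `k^p`, uniformly in `p ≥ 1`.

The function `φ` above is not smooth, so two approximations are needed. Mollification extends the
hypothesis to nonnegative `C¹` test functions (`weak_ineq_of_contDiff_one`), and `|u|^p`, which is
not `C¹` for `p = 1`, is replaced by `(u² + δ)^{p/2} - δ^{p/2}` with `δ → 0`
(`regularized_ineq`).
-/

open MeasureTheory Set Filter
open scoped RealInnerProductSpace Topology ENNReal NNReal

noncomputable section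

/-- `ℝ^N` as a Euclidean space. -/
abbrev Euc (N : ℕ) := EuclideanSpace ℝ (Fin N)

/-- `H : ℝ^N → ℝ` is a Finsler norm: nonnegative, convex, `C²` away from the origin,
even and positively one-homogeneous, comparable to the Euclidean norm, and with
positive definite Hessian of `H²` away from the origin. -/
structure IsFinslerNorm {N : ℕ} (H : Euc N → ℝ) : Prop where
  nonneg : ∀ ξ, 0 ≤ H ξ
  convexOn : ConvexOn ℝ Set.univ H
  smooth : ContDiffOn ℝ 2 H {(0 : Euc N)}ᶜ
  homog : ∀ (t : ℝ) (ξ : Euc N), H (t • ξ) = |t| * H ξ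
  bounds : ∃ a b : ℝ, 0 < a ∧ a ≤ b ∧ ∀ ξ : Euc N, a * ‖ξ‖ ≤ H ξ ∧ H ξ ≤ b * ‖ξ‖
  hessPosDef : ∀ ξ : Euc N, ξ ≠ 0 → ∀ v : Euc N, v ≠ 0 →
    0 < iteratedFDeriv ℝ 2 (fun x => (H x) ^ 2) ξ ![v, v]

/-- The polar function `H⁰(x) = sup_{ξ ≠ 0} (ξ·x)/H(ξ)` of a Finsler norm. -/
def polarNorm {N : ℕ} (H : Euc N → ℝ) (x : Euc N) : ℝ :=
  sSup {r : ℝ | ∃ ξ : Euc N, ξ ≠ 0 ∧ r = ⟪ξ, x⟫ / H ξ}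

/-- `u ∈ C_c^∞(Ω)`: a smooth function with compact support contained in `Ω`. -/
def IsTestFun {N : ℕ} (Ω : Set (Euc N)) (u : Euc N → ℝ) : Prop :=
  ContDiff ℝ (⊤ : ℕ∞) u ∧ HasCompactSupport u ∧ tsupport u ⊆ Ω

/-! ### Passing from smooth to `C¹` test functions -/

theorem continuous_of_zero_off {X : Type*} [TopologicalSpace X] {Ω K : Set X} (hΩ : IsOpen Ω)
    (hK : IsClosed K) (hKΩ : K ⊆ Ω) {F : X → ℝ} (hF : ContinuousOn F Ω)
    (h0 : ∀ x, x ∉ K → F x = 0) : Continuous F := by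
  have hs : tsupport F ⊆ K :=
    closure_minimal (fun x hx => by_contra fun h => hx (h0 x h)) hK
  exact continuous_of_tsupport fun x hx => hF.continuousAt (hΩ.mem_nhds (hKΩ (hs hx)))

/-- Dominated convergence for uniformly bounded continuous functions that vanish off a common
compact set. -/
theorem tendsto_integral_of_bounded {N : ℕ} {K : Set (Euc N)} (hK : IsCompact K) (M : ℝ)
    {F : ℕ → Euc N → ℝ} {f : Euc N → ℝ} (hF : ∀ n, Continuous (F n))
    (h0 : ∀ n x, x ∉ K → F n x = 0) (hM : ∀ n, ∀ x ∈ K, |F n x| ≤ M)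
    (hlim : ∀ x, Tendsto (fun n => F n x) atTop (𝓝 (f x))) :
    Tendsto (fun n => ∫ x, F n x) atTop (𝓝 (∫ x, f x)) := by
  refine tendsto_integral_of_dominated_convergence (K.indicator fun _ => M)
    (fun n => (hF n).aestronglyMeasurable) ?_ ?_ (Eventually.of_forall hlim)
  · rw [integrable_indicator_iff hK.measurableSet]
    exact integrableOn_const hK.measure_lt_top.ne
  · refine fun n => Eventually.of_forall fun x => ?_
    by_cases hx : x ∈ K
    · simpa [hx] using hM n x hx
    · simp [hx, h0 n x hx]

open ContinuousLinearMap Convolution in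
/-- The weak inequality `div b ≥ w` with continuous `b` and `w` on `Ω`, known for
nonnegative `C_c^∞(Ω)` test functions, also holds for nonnegative `C_c¹(Ω)` ones: mollify, and use that
the mollified functions and their derivatives stay bounded, stay supported in a fixed compact
subset of `Ω`, and converge pointwise. -/
theorem weak_ineq_of_contDiff_one {N : ℕ} {Ω : Set (Euc N)} (hΩ : IsOpen Ω)
    {w : Euc N → ℝ} {b : Euc N → Euc N} (hw : ContinuousOn w Ω) (hb : ContinuousOn b Ω)
    (hsuper : ∀ φ : Euc N → ℝ, IsTestFun Ω φ → (∀ x, 0 ≤ φ x) →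
      ∫ x, w x * φ x ≤ -∫ x, fderiv ℝ φ x (b x))
    {φ : Euc N → ℝ} (hφ : ContDiff ℝ 1 φ) (hc : HasCompactSupport φ)
    (hsub : tsupport φ ⊆ Ω) (hnn : ∀ x, 0 ≤ φ x) :
    ∫ x, w x * φ x ≤ -∫ x, fderiv ℝ φ x (b x) := by
  obtain ⟨δ, hδ, hδΩ⟩ := IsCompact.exists_cthickening_subset_open hc hΩ hsub
  set K := Metric.cthickening δ (tsupport φ) with hKdef
  have hK : IsCompact K := IsCompact.cthickening hc
  let η : ℕ → ContDiffBump (0 : Euc N) := fun n =>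
    { rIn := δ / (n + 1) / 2, rOut := δ / (n + 1), rIn_pos := by positivity
      rIn_lt_rOut := half_lt_self (by positivity) }
  have hηδ : ∀ n, (η n).rOut ≤ δ := fun n => by
    change δ / ((n : ℝ) + 1) ≤ δ
    exact div_le_self hδ.le (by linarith [Nat.cast_nonneg (α := ℝ) n])
  have hη0 : Tendsto (fun n => (η n).rOut) atTop (𝓝 0) :=
    tendsto_const_div_atTop_nhds_zero_nat δ |>.comp (tendsto_add_atTop_nat 1) |>.congr fun n => by
      simp [η]
  have hφc := hφ.continuous
  have hdc : Continuous (fderiv ℝ φ) := hφ.continuous_fderiv one_ne_zero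
  let ψ : ℕ → Euc N → ℝ := fun n => (η n).normed volume ⋆[lsmul ℝ ℝ, volume] φ
  let dψ : ℕ → Euc N → (Euc N →L[ℝ] ℝ) :=
    fun n => (η n).normed volume ⋆[lsmul ℝ ℝ, volume] (fderiv ℝ φ)
  have hηloc : ∀ n, LocallyIntegrable ((η n).normed volume) (volume : Measure (Euc N)) :=
    fun n => (η n).continuous_normed.locallyIntegrable
  have hψ_smooth : ∀ n, ContDiff ℝ (⊤ : ℕ∞) (ψ n) := fun n =>
    HasCompactSupport.contDiff_convolution_left _ (η n).hasCompactSupport_normed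
      (η n).contDiff_normed hφc.locallyIntegrable
  have hψ_deriv : ∀ n x, fderiv ℝ (ψ n) x = dψ n x := by
    intro n x
    have h := HasCompactSupport.hasFDerivAt_convolution_right (lsmul ℝ ℝ) hc (hηloc n) hφ x
    exact h.fderiv
  have off : ∀ x, x ∉ K → ∀ n, ∀ y ∈ Metric.ball x (η n).rOut, y ∉ tsupport φ := by
    intro x hx n y hy hyS
    refine hx (Metric.mem_cthickening_of_dist_le x y δ _ hyS ?_)
    rw [dist_comm]
    exact (Metric.mem_ball.1 hy).le.trans (hηδ n)
  have hψ0 : ∀ n x, x ∉ K → ψ n x = 0 := by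
    intro n x hx
    have hz : ∀ y ∈ Metric.ball x (η n).rOut, φ y = 0 :=
      fun y hy => image_eq_zero_of_notMem_tsupport (off x hx n y hy)
    have hzx := hz x (Metric.mem_ball_self (η n).rOut_pos)
    exact ((η n).normed_convolution_eq_right (fun y hy => (hz y hy).trans hzx.symm)).trans hzx
  have hdψ0 : ∀ n x, x ∉ K → dψ n x = 0 := by
    intro n x hx
    have hz : ∀ y ∈ Metric.ball x (η n).rOut, fderiv ℝ φ y = 0 :=
      fun y hy => fderiv_of_notMem_tsupport ℝ (off x hx n y hy)
    have hzx := hz x (Metric.mem_ball_self (η n).rOut_pos)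
    exact ((η n).normed_convolution_eq_right (fun y hy => (hz y hy).trans hzx.symm)).trans hzx
  have hψ_sub : ∀ n, tsupport (ψ n) ⊆ K := fun n =>
    closure_minimal (fun x hx => by_contra fun h => hx (hψ0 n x h)) hK.isClosed
  have hψ_test : ∀ n, IsTestFun Ω (ψ n) := fun n =>
    ⟨hψ_smooth n, HasCompactSupport.intro hK (hψ0 n), (hψ_sub n).trans hδΩ⟩
  have hψ_nn : ∀ n x, 0 ≤ ψ n x := fun n x =>
    integral_nonneg fun t => mul_nonneg ((η n).nonneg_normed t) (hnn _)
  obtain ⟨M₁, hM₁⟩ := hc.exists_bound_of_continuous hφc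
  obtain ⟨M₂, hM₂⟩ := (hc.fderiv (𝕜 := ℝ)).exists_bound_of_continuous hdc
  -- averages of a function bounded by `M` differ from its values by at most `2M`, hence `3M`
  have hψM : ∀ n x, ‖ψ n x‖ ≤ 3 * M₁ := by
    intro n x
    have h := (η n).dist_normed_convolution_le (μ := volume) (x₀ := x) (ε := 2 * M₁)
      hφc.aestronglyMeasurable fun y _ => by
        rw [dist_eq_norm]
        linarith [norm_sub_le (φ y) (φ x), hM₁ x, hM₁ y]
    rw [dist_eq_norm] at h
    have := norm_sub_norm_le (ψ n x) (φ x)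
    linarith [hM₁ x]
  have hdψM : ∀ n x, ‖dψ n x‖ ≤ 3 * M₂ := by
    intro n x
    have h := (η n).dist_normed_convolution_le (μ := volume) (x₀ := x) (ε := 2 * M₂)
      hdc.aestronglyMeasurable fun y _ => by
        rw [dist_eq_norm]
        linarith [norm_sub_le (fderiv ℝ φ y) (fderiv ℝ φ x), hM₂ x, hM₂ y]
    rw [dist_eq_norm] at h
    have := norm_sub_norm_le (dψ n x) (fderiv ℝ φ x)
    linarith [hM₂ x]
  have hM₁0 : 0 ≤ M₁ := (norm_nonneg _).trans (hM₁ 0)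
  have hM₂0 : 0 ≤ M₂ := (norm_nonneg _).trans (hM₂ 0)
  obtain ⟨W, hW⟩ := hK.exists_bound_of_continuousOn (hw.mono hδΩ)
  obtain ⟨B, hB⟩ := hK.exists_bound_of_continuousOn (hb.mono hδΩ)
  have hdψc : ∀ n, Continuous (dψ n) := fun n => by
    rw [← funext (hψ_deriv n)]
    exact (hψ_smooth n).continuous_fderiv (by simp)
  have lim1 : Tendsto (fun n => ∫ x, w x * ψ n x) atTop (𝓝 (∫ x, w x * φ x)) := by
    refine tendsto_integral_of_bounded hK (W * (3 * M₁)) (fun n => ?_) (fun n x hx => ?_)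
      (fun n x hx => ?_) (fun x => ?_)
    · exact continuous_of_zero_off hΩ hK.isClosed hδΩ
        (hw.mul (hψ_smooth n).continuous.continuousOn) fun x hx => by simp [hψ0 n x hx]
    · simp [hψ0 n x hx]
    · rw [abs_mul]
      exact mul_le_mul (hW x hx) (hψM n x) (abs_nonneg _) ((norm_nonneg _).trans (hW x hx))
    · exact (ContDiffBump.convolution_tendsto_right_of_continuous hη0 hφc x).const_mul _
  have lim2 : Tendsto (fun n => ∫ x, dψ n x (b x)) atTop (𝓝 (∫ x, fderiv ℝ φ x (b x))) := by
    refine tendsto_integral_of_bounded hK (3 * M₂ * B) (fun n => ?_) (fun n x hx => ?_)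
      (fun n x hx => ?_) (fun x => ?_)
    · exact continuous_of_zero_off hΩ hK.isClosed hδΩ
        ((hdψc n).continuousOn.clm_apply hb) fun x hx => by simp [hdψ0 n x hx]
    · simp [hdψ0 n x hx]
    · exact (le_opNorm _ _).trans
        (mul_le_mul (hdψM n x) (hB x hx) (norm_nonneg _) (by positivity))
    · exact ((ContinuousLinearMap.apply ℝ ℝ (b x)).continuous.tendsto _).comp
        (ContDiffBump.convolution_tendsto_right_of_continuous hη0 hdc x)
  refine le_of_tendsto_of_tendsto' lim1 lim2.neg fun n => ?_
  have := hsuper (ψ n) (hψ_test n) (hψ_nn n)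
  simpa only [hψ_deriv] using this

/-! ### Euler's identity -/

/-- Euler's identity for the one-homogeneous function `H`. -/
theorem IsFinslerNorm.fderiv_apply_self {N : ℕ} {H : Euc N → ℝ} (hH : IsFinslerNorm H)
    {ξ : Euc N} (hξ : ξ ≠ 0) : fderiv ℝ H ξ ξ = H ξ := by
  have hd : DifferentiableAt ℝ H ξ :=
    (hH.smooth.contDiffAt (isOpen_compl_singleton.mem_nhds hξ)).differentiableAt (by simp)
  have h1 : HasDerivAt (fun t : ℝ => t • ξ) ξ 1 := by
    simpa using (hasDerivAt_id (1 : ℝ)).smul_const ξ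
  have h2 : HasDerivAt (fun t : ℝ => H (t • ξ)) (fderiv ℝ H ξ ξ) 1 := by
    have hd' : HasFDerivAt H (fderiv ℝ H ξ) ((1 : ℝ) • ξ) := by
      rw [one_smul]; exact hd.hasFDerivAt
    exact hd'.comp_hasDerivAt 1 h1
  have h3 : HasDerivAt (fun t : ℝ => H (t • ξ)) (H ξ) 1 := by
    have : HasDerivAt (fun t : ℝ => t * H ξ) (H ξ) 1 := by
      simpa using (hasDerivAt_id (1 : ℝ)).mul_const (H ξ)
    refine this.congr_of_eventuallyEq ?_
    filter_upwards [lt_mem_nhds (zero_lt_one (α := ℝ))] with t ht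
    rw [hH.homog, abs_of_pos ht]
  exact h2.unique h3

/-! ### The weighted inequality for a general field -/

/-- The weak inequality tested with `ρ^{a+1} ((u² + δ)^{p/2} - δ^{p/2})`. The regularization of
`|u|^p` by `δ` makes this test function `C¹` also when `p = 1`; subtracting `δ^{p/2}` keeps its
support inside that of `u`. -/
theorem regularized_ineq {N : ℕ} {Ω : Set (Euc N)} (hΩ : IsOpen Ω)
    {ρ : Euc N → ℝ} (hρ : ContDiffOn ℝ 1 ρ Ω) (hρpos : ∀ x ∈ Ω, 0 < ρ x)
    {b : Euc N → Euc N} (hb : ContinuousOn b Ω) (hbρ : ∀ x ∈ Ω, fderiv ℝ ρ x (b x) = 1)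
    {C : ℝ} (hsuper : ∀ φ : Euc N → ℝ, IsTestFun Ω φ → (∀ x, 0 ≤ φ x) →
      ∫ x, (C / ρ x) * φ x ≤ -∫ x, fderiv ℝ φ x (b x))
    {p : ℝ} (hp : 1 ≤ p) (a : ℝ) {u : Euc N → ℝ} (hu : IsTestFun Ω u) {δ : ℝ} (hδ : 0 < δ) :
    (C + a + 1) * ∫ x, ρ x ^ a * ((u x ^ 2 + δ) ^ (p / 2) - δ ^ (p / 2))
      ≤ p * ∫ x, ρ x ^ (a + 1) * ((u x ^ 2 + δ) ^ ((p - 1) / 2) * |fderiv ℝ u x (b x)|) := by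
  obtain ⟨hus, huc, huΩ⟩ := hu
  have hK : IsCompact (tsupport u) := huc
  have hu0 : ∀ x, x ∉ tsupport u → u x = 0 := fun x hx => image_eq_zero_of_notMem_tsupport hx
  have hdu0 : ∀ x, x ∉ tsupport u → fderiv ℝ u x = 0 := fun x hx =>
    fderiv_of_notMem_tsupport ℝ hx
  have hduc : Continuous (fderiv ℝ u) := hus.continuous_fderiv (by simp)
  have hdub : ContinuousOn (fun x => fderiv ℝ u x (b x)) Ω := hduc.continuousOn.clm_apply hb
  have hpos : ∀ x, 0 < u x ^ 2 + δ := fun x => by positivity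
  have hqc : ∀ r : ℝ, Continuous fun x => (u x ^ 2 + δ) ^ r := fun r =>
    ((hus.continuous.pow 2).add continuous_const).rpow_const fun x => Or.inl (hpos x).ne'
  have hρc : ∀ r : ℝ, ContinuousOn (fun x => ρ x ^ r) Ω := fun r =>
    hρ.continuousOn.rpow_const fun x hx => Or.inl (hρpos x hx).ne'
  set g : Euc N → ℝ := fun x => (u x ^ 2 + δ) ^ (p / 2) - δ ^ (p / 2) with hg
  have hg0 : ∀ x, x ∉ tsupport u → g x = 0 := fun x hx => by simp [hg, hu0 x hx]
  have hgnn : ∀ x, 0 ≤ g x := fun x => sub_nonneg.2 <|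
    Real.rpow_le_rpow hδ.le (by nlinarith [sq_nonneg (u x)]) (by linarith)
  have hgs : ContDiff ℝ 1 g := by
    have h1 : ContDiff ℝ 1 fun x => u x ^ 2 + δ :=
      ((hus.of_le (by simp)).pow 2).add contDiff_const
    exact (h1.rpow_const_of_ne fun x => (hpos x).ne').sub contDiff_const
  set φ : Euc N → ℝ := fun x => ρ x ^ (a + 1) * g x with hφdef
  have hφ0 : ∀ x, x ∉ tsupport u → φ x = 0 := fun x hx => by simp [hφdef, hg0 x hx]
  have hφsub : tsupport φ ⊆ tsupport u :=
    closure_minimal (fun x hx => by_contra fun h => hx (hφ0 x h)) hK.isClosed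
  have hρat : ∀ x ∈ Ω, ContDiffAt ℝ 1 ρ x := fun x hx => hρ.contDiffAt (hΩ.mem_nhds hx)
  have hφs : ContDiff ℝ 1 φ := contDiff_iff_contDiffAt.2 fun x => by
    by_cases hx : x ∈ tsupport u
    · have hxΩ := huΩ hx
      exact ((hρat x hxΩ).rpow_const_of_ne (hρpos x hxΩ).ne').mul hgs.contDiffAt
    · refine (contDiffAt_const (c := (0 : ℝ))).congr_of_eventuallyEq ?_
      filter_upwards [hK.isClosed.isOpen_compl.mem_nhds hx] with y hy using hφ0 y hy
  have hφnn : ∀ x, 0 ≤ φ x := fun x => by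
    by_cases hx : x ∈ tsupport u
    · exact mul_nonneg (Real.rpow_nonneg (hρpos x (huΩ hx)).le _) (hgnn x)
    · exact (hφ0 x hx).ge
  have key := weak_ineq_of_contDiff_one hΩ (w := fun x => C / ρ x)
    (continuousOn_const.div hρ.continuousOn fun x hx => (hρpos x hx).ne') hb hsuper hφs
    (HasCompactSupport.intro hK hφ0) (hφsub.trans huΩ) hφnn
  have hderiv : ∀ x, fderiv ℝ φ x (b x) = (a + 1) * (ρ x ^ a * g x) +
      p * (ρ x ^ (a + 1) * ((u x ^ 2 + δ) ^ (p / 2 - 1) * u x * fderiv ℝ u x (b x))) := by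
    intro x
    by_cases hx : x ∈ tsupport u
    · have hxΩ := huΩ hx
      have d1 : HasFDerivAt ρ (fderiv ℝ ρ x) x :=
        ((hρat x hxΩ).differentiableAt one_ne_zero).hasFDerivAt
      have d2 : HasFDerivAt u (fderiv ℝ u x) x :=
        (hus.differentiable (by simp) x).hasFDerivAt
      have d3 := d1.rpow_const (p := a + 1) (Or.inl (hρpos x hxΩ).ne')
      have d4 := (((d2.pow 2).add_const δ).rpow_const (p := p / 2)
        (Or.inl (hpos x).ne')).sub_const (δ ^ (p / 2))
      have d5 := (d3.mul d4).fderiv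
      have e : fderiv ℝ φ x = _ := d5
      rw [e]
      simp [hbρ x hxΩ, hg]
      ring
    · have : fderiv ℝ φ x = 0 := fderiv_of_notMem_tsupport ℝ fun h => hx (hφsub h)
      simp [this, hg0 x hx, hdu0 x hx]
  have hinteg : ∀ {F : Euc N → ℝ}, ContinuousOn F Ω → (∀ x, x ∉ tsupport u → F x = 0) →
      Integrable F := fun hF h0 =>
    (continuous_of_zero_off hΩ hK.isClosed huΩ hF h0).integrable_of_hasCompactSupport
      (HasCompactSupport.intro hK h0)
  have i1 : Integrable fun x => ρ x ^ a * g x :=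
    hinteg ((hρc a).mul hgs.continuous.continuousOn) fun x hx => by simp [hg0 x hx]
  have i2 : Integrable fun x =>
      ρ x ^ (a + 1) * ((u x ^ 2 + δ) ^ (p / 2 - 1) * u x * fderiv ℝ u x (b x)) :=
    hinteg ((hρc _).mul ((((hqc _).mul hus.continuous).continuousOn).mul hdub)) fun x hx => by
      simp [hu0 x hx]
  have i3 : Integrable fun x =>
      ρ x ^ (a + 1) * ((u x ^ 2 + δ) ^ ((p - 1) / 2) * |fderiv ℝ u x (b x)|) :=
    hinteg ((hρc _).mul ((hqc _).continuousOn.mul hdub.abs)) fun x hx => by simp [hdu0 x hx]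
  have hleft : ∫ x, C / ρ x * φ x = C * ∫ x, ρ x ^ a * g x := by
    rw [← integral_const_mul]
    refine integral_congr_ae (Eventually.of_forall fun x => ?_)
    by_cases hx : x ∈ tsupport u
    · have := hρpos x (huΩ hx)
      simp only [hφdef]
      rw [Real.rpow_add_one this.ne']
      field_simp
    · simp [hφ0 x hx, hg0 x hx]
  rw [hleft, integral_congr_ae (Eventually.of_forall hderiv),
    integral_add (i1.const_mul _) (i2.const_mul _), integral_const_mul, integral_const_mul] at key
  have hcmp : -∫ x, ρ x ^ (a + 1) * ((u x ^ 2 + δ) ^ (p / 2 - 1) * u x * fderiv ℝ u x (b x))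
      ≤ ∫ x, ρ x ^ (a + 1) * ((u x ^ 2 + δ) ^ ((p - 1) / 2) * |fderiv ℝ u x (b x)|) := by
    rw [← integral_neg]
    refine integral_mono i2.neg i3 fun x => ?_
    by_cases hx : x ∈ tsupport u
    · change -(ρ x ^ (a + 1) * ((u x ^ 2 + δ) ^ (p / 2 - 1) * u x * fderiv ℝ u x (b x))) ≤ _
      rw [← mul_neg]
      refine mul_le_mul_of_nonneg_left ?_ (Real.rpow_nonneg (hρpos x (huΩ hx)).le _)
      refine (neg_le_abs _).trans ?_
      rw [abs_mul, abs_mul, abs_of_pos (Real.rpow_pos_of_pos (hpos x) _)]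
      refine mul_le_mul_of_nonneg_right ?_ (abs_nonneg _)
      -- `|u| ≤ (u² + δ)^{1/2}`, and the exponents add up to `(p - 1) / 2`
      have h1 : |u x| ≤ (u x ^ 2 + δ) ^ (1 / 2 : ℝ) := by
        rw [← Real.sqrt_eq_rpow]
        exact Real.abs_le_sqrt (by linarith)
      calc (u x ^ 2 + δ) ^ (p / 2 - 1) * |u x|
          ≤ (u x ^ 2 + δ) ^ (p / 2 - 1) * (u x ^ 2 + δ) ^ (1 / 2 : ℝ) :=
            mul_le_mul_of_nonneg_left h1 (Real.rpow_nonneg (hpos x).le _)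
        _ = (u x ^ 2 + δ) ^ ((p - 1) / 2) := by
            rw [← Real.rpow_add (hpos x)]; ring_nf
    · simp [hdu0 x hx]
  have := mul_le_mul_of_nonneg_left hcmp (by linarith : (0 : ℝ) ≤ p)
  linarith

/-- The limit `δ → 0` of `regularized_ineq`, i.e. formally the weak inequality tested with
`ρ^{a+1} |u|^p`. For `p = 1` the factor `|u x| ^ (p - 1)` is `1` everywhere, including at the zeros
of `u`. -/
theorem limit_ineq {N : ℕ} {Ω : Set (Euc N)} (hΩ : IsOpen Ω)
    {ρ : Euc N → ℝ} (hρ : ContDiffOn ℝ 1 ρ Ω) (hρpos : ∀ x ∈ Ω, 0 < ρ x)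
    {b : Euc N → Euc N} (hb : ContinuousOn b Ω) (hbρ : ∀ x ∈ Ω, fderiv ℝ ρ x (b x) = 1)
    {C : ℝ} (hsuper : ∀ φ : Euc N → ℝ, IsTestFun Ω φ → (∀ x, 0 ≤ φ x) →
      ∫ x, (C / ρ x) * φ x ≤ -∫ x, fderiv ℝ φ x (b x))
    {p : ℝ} (hp : 1 ≤ p) (a : ℝ) {u : Euc N → ℝ} (hu : IsTestFun Ω u) :
    (C + a + 1) * ∫ x, ρ x ^ a * |u x| ^ p
      ≤ p * ∫ x, ρ x ^ (a + 1) * (|u x| ^ (p - 1) * |fderiv ℝ u x (b x)|) := by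
  have hreg := fun n : ℕ => regularized_ineq hΩ hρ hρpos hb hbρ hsuper hp a hu
    (δ := 1 / ((n : ℝ) + 1)) (by positivity)
  obtain ⟨hus, huc, huΩ⟩ := hu
  have hK : IsCompact (tsupport u) := huc
  have hu0 : ∀ x, x ∉ tsupport u → u x = 0 := fun x hx => image_eq_zero_of_notMem_tsupport hx
  have hdu0 : ∀ x, x ∉ tsupport u → fderiv ℝ u x = 0 := fun x hx =>
    fderiv_of_notMem_tsupport ℝ hx
  have hduc : Continuous (fderiv ℝ u) := hus.continuous_fderiv (by simp)
  have hdub : ContinuousOn (fun x => fderiv ℝ u x (b x)) Ω := hduc.continuousOn.clm_apply hb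
  have hρc : ∀ r : ℝ, ContinuousOn (fun x => ρ x ^ r) Ω := fun r =>
    hρ.continuousOn.rpow_const fun x hx => Or.inl (hρpos x hx).ne'
  have hqc : ∀ (δ r : ℝ), 0 ≤ r → Continuous fun x => (u x ^ 2 + δ) ^ r := fun δ r hr =>
    ((hus.continuous.pow 2).add continuous_const).rpow_const fun x => Or.inr hr
  have hδ0 : ∀ n : ℕ, 0 ≤ 1 / ((n : ℝ) + 1) := fun n => by positivity
  have hδ1 : ∀ n : ℕ, 1 / ((n : ℝ) + 1) ≤ 1 := fun n => by
    rw [div_le_one (by positivity)]; linarith [Nat.cast_nonneg (α := ℝ) n]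
  have hqle : ∀ (n : ℕ) (r : ℝ) (x : Euc N), 0 ≤ r →
      (u x ^ 2 + 1 / ((n : ℝ) + 1)) ^ r ≤ (u x ^ 2 + 1) ^ r := fun n r x hr =>
    Real.rpow_le_rpow (add_nonneg (sq_nonneg _) (hδ0 n)) (by linarith [hδ1 n]) hr
  have hqnn : ∀ (n : ℕ) (r : ℝ) (x : Euc N), 0 ≤ (u x ^ 2 + 1 / ((n : ℝ) + 1)) ^ r :=
    fun n r x => Real.rpow_nonneg (add_nonneg (sq_nonneg _) (hδ0 n)) _
  have hqlim : ∀ (r y : ℝ), 0 ≤ r →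
      Tendsto (fun n : ℕ => (y ^ 2 + 1 / ((n : ℝ) + 1)) ^ (r / 2)) atTop (𝓝 (|y| ^ r)) := by
    intro r y hr
    have h := (tendsto_one_div_add_atTop_nhds_zero_nat (𝕜 := ℝ)).const_add (y ^ 2)
    have h' := h.rpow_const (p := r / 2) (Or.inr (by linarith))
    have e : (y ^ 2 + 0) ^ (r / 2) = |y| ^ r := by
      rw [add_zero, ← sq_abs, ← Real.rpow_natCast, ← Real.rpow_mul (abs_nonneg y)]
      congr 1
      push_cast
      ring
    rwa [e] at h'
  have hp0 : 0 ≤ p / 2 := by linarith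
  have hp1 : 0 ≤ (p - 1) / 2 := by linarith
  refine le_of_tendsto_of_tendsto' (b := atTop) (Tendsto.const_mul (C + a + 1) ?_)
    (Tendsto.const_mul p ?_) hreg
  · obtain ⟨M, hM⟩ := hK.exists_bound_of_continuousOn
      (((hρc a).mul (hqc 1 (p / 2) hp0).continuousOn).mono huΩ)
    refine tendsto_integral_of_bounded hK M (fun n => ?_) (fun n x hx => ?_)
      (fun n x hx => ?_) (fun x => ?_)
    · exact continuous_of_zero_off hΩ hK.isClosed huΩ
        ((hρc a).mul ((hqc _ _ hp0).sub continuous_const).continuousOn)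
        fun x hx => by simp [hu0 x hx]
    · simp [hu0 x hx]
    · refine le_trans ?_ ((le_abs_self _).trans (hM x hx))
      have h1 : (1 / ((n : ℝ) + 1)) ^ (p / 2) ≤ (u x ^ 2 + 1 / ((n : ℝ) + 1)) ^ (p / 2) :=
        Real.rpow_le_rpow (hδ0 n) (by linarith [sq_nonneg (u x)]) hp0
      have h2 : 0 ≤ (1 / ((n : ℝ) + 1)) ^ (p / 2) := Real.rpow_nonneg (hδ0 n) _
      have h3 := Real.rpow_nonneg (hρpos x (huΩ hx)).le a
      rw [abs_mul, abs_of_nonneg h3, abs_of_nonneg (sub_nonneg.2 h1)]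
      exact mul_le_mul_of_nonneg_left (by linarith [hqle n (p / 2) x hp0]) h3
    · have h := ((hqlim p (u x) (by linarith)).sub (hqlim p 0 (by linarith))).const_mul (ρ x ^ a)
      simpa [Real.zero_rpow (by linarith : p ≠ 0)] using h
  · obtain ⟨M, hM⟩ := hK.exists_bound_of_continuousOn
      (((hρc (a + 1)).mul ((hqc 1 _ hp1).continuousOn.mul hdub.abs)).mono huΩ)
    refine tendsto_integral_of_bounded hK M (fun n => ?_) (fun n x hx => ?_)
      (fun n x hx => ?_) (fun x => ?_)
    · exact continuous_of_zero_off hΩ hK.isClosed huΩ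
        ((hρc _).mul ((hqc _ _ hp1).continuousOn.mul hdub.abs))
        fun x hx => by simp [hdu0 x hx]
    · simp [hdu0 x hx]
    · refine le_trans ?_ ((le_abs_self _).trans (hM x hx))
      have h3 := Real.rpow_nonneg (hρpos x (huΩ hx)).le (a + 1)
      rw [abs_of_nonneg (mul_nonneg h3 (mul_nonneg (hqnn _ _ _) (abs_nonneg _)))]
      exact mul_le_mul_of_nonneg_left
        (mul_le_mul_of_nonneg_right (hqle n _ x hp1) (abs_nonneg _)) h3
    · exact ((hqlim (p - 1) (u x) (by linarith)).mul_const _).const_mul _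

/-- Young's inequality in a form that includes the endpoint `p = 1`. -/
theorem young_aux {p : ℝ} (hp : 1 ≤ p) {s t : ℝ} (hs : 0 ≤ s) (ht : 0 ≤ t) :
    t ^ (p - 1) * s ≤ (1 - 1 / p) * t ^ p + 1 / p * s ^ p := by
  have hp0 : 0 < p := by linarith
  have h := Real.geom_mean_le_arith_mean2_weighted (w₁ := 1 - 1 / p) (w₂ := 1 / p)
    (p₁ := t ^ p) (p₂ := s ^ p) (by rw [sub_nonneg, div_le_one hp0]; exact hp) (by positivity)
    (by positivity) (by positivity) (by ring)
  rw [← Real.rpow_mul ht, ← Real.rpow_mul hs] at h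
  have e1 : p * (1 - 1 / p) = p - 1 := by field_simp
  have e2 : p * (1 / p) = 1 := by field_simp
  rwa [e1, e2, Real.rpow_one] at h

/-! ### The Hardy-Poincaré inequality -/

/-- Weighted anisotropic Hardy-Poincaré inequality. -/
theorem finsler_weighted_hardy_poincare
    (N : ℕ) (hN : 2 ≤ N) (H : Euc N → ℝ) (hH : IsFinslerNorm H)
    (p : ℝ) (hp : 1 ≤ p)
    (ρ : Euc N → ℝ) (hρ : ContDiffOn ℝ 1 ρ {(0 : Euc N)}ᶜ)
    (hρpos : ∀ x : Euc N, x ≠ 0 → 0 < ρ x)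
    (heik : ∀ x : Euc N, x ≠ 0 → H (gradient ρ x) = 1)
    (C : ℝ) (hC : 0 < C)
    (hsuper : ∀ φ : Euc N → ℝ, IsTestFun {(0 : Euc N)}ᶜ φ → (∀ x, 0 ≤ φ x) →
      ∫ x, (C / ρ x) * φ x ≤ -∫ x, ⟪gradient H (gradient ρ x), gradient φ x⟫)
    (a : ℝ) (ha : -1 < C + a)
    (u : Euc N → ℝ) (hu : IsTestFun {(0 : Euc N)}ᶜ u) :
    ((C + a + 1) / p) ^ p * ∫ x, ρ x ^ a * |u x| ^ p
      ≤ ∫ x, ρ x ^ (a + p) * |⟪gradient H (gradient ρ x), gradient u x⟫| ^ p := by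
  have hΩ : IsOpen ({(0 : Euc N)}ᶜ) := isOpen_compl_singleton
  have hinner : ∀ (f : Euc N → ℝ) (x v : Euc N), ⟪v, gradient f x⟫ = fderiv ℝ f x v :=
    fun f x v => by rw [real_inner_comm, inner_gradient_left]
  simp only [hinner] at hsuper ⊢
  set b : Euc N → Euc N := fun x => gradient H (gradient ρ x) with hbdef
  have hH0 : H 0 = 0 := by simpa using hH.homog 0 0
  have hgrad0 : ∀ x : Euc N, x ≠ 0 → gradient ρ x ≠ 0 := fun x hx h => by
    have := heik x hx
    rw [h, hH0] at this
    exact zero_ne_one this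
  have hgradc : ∀ {f : Euc N → ℝ}, ContDiffOn ℝ 1 f {(0 : Euc N)}ᶜ →
      ContinuousOn (gradient f) {(0 : Euc N)}ᶜ := fun hf =>
    (InnerProductSpace.toDual ℝ (Euc N)).symm.continuous.comp_continuousOn
      (hf.continuousOn_fderiv_of_isOpen hΩ le_rfl)
  have hb : ContinuousOn b {(0 : Euc N)}ᶜ :=
    (hgradc (hH.smooth.of_le (by norm_num))).comp (hgradc hρ) fun x hx => hgrad0 x hx
  have hbρ : ∀ x ∈ ({(0 : Euc N)}ᶜ : Set (Euc N)), fderiv ℝ ρ x (b x) = 1 := fun x hx => by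
    rw [← hinner, hbdef, inner_gradient_left, hH.fderiv_apply_self (hgrad0 x hx), heik x hx]
  have hmain := limit_ineq hΩ hρ hρpos hb hbρ hsuper hp a hu
  obtain ⟨hus, huc, huΩ⟩ := hu
  have hK : IsCompact (tsupport u) := huc
  have hu0 : ∀ x, x ∉ tsupport u → u x = 0 := fun x hx => image_eq_zero_of_notMem_tsupport hx
  have hdu0 : ∀ x, x ∉ tsupport u → fderiv ℝ u x = 0 := fun x hx =>
    fderiv_of_notMem_tsupport ℝ hx
  have hduc : Continuous (fderiv ℝ u) := hus.continuous_fderiv (by simp)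
  have hdub : ContinuousOn (fun x => fderiv ℝ u x (b x)) {(0 : Euc N)}ᶜ :=
    hduc.continuousOn.clm_apply hb
  have hρc : ∀ r : ℝ, ContinuousOn (fun x => ρ x ^ r) {(0 : Euc N)}ᶜ := fun r =>
    hρ.continuousOn.rpow_const fun x hx => Or.inl (hρpos x hx).ne'
  have hinteg : ∀ {F : Euc N → ℝ}, ContinuousOn F {(0 : Euc N)}ᶜ →
      (∀ x, x ∉ tsupport u → F x = 0) → Integrable F := fun hF h0 =>
    (continuous_of_zero_off hΩ hK.isClosed huΩ hF h0).integrable_of_hasCompactSupport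
      (HasCompactSupport.intro hK h0)
  have hp0 : 0 < p := by linarith
  set k := (C + a + 1) / p with hk
  have hkpos : 0 < k := div_pos (by linarith) hp0
  have hkp : 0 < k ^ p := Real.rpow_pos_of_pos hkpos p
  have iA : Integrable fun x => ρ x ^ a * |u x| ^ p :=
    hinteg ((hρc a).mul (hus.continuous.abs.rpow_const fun x => Or.inr hp0.le).continuousOn)
      fun x hx => by simp [hu0 x hx, Real.zero_rpow hp0.ne']
  have iB : Integrable fun x => ρ x ^ (a + p) * |fderiv ℝ u x (b x)| ^ p :=
    hinteg ((hρc _).mul (hdub.abs.rpow_const fun x _ => Or.inr hp0.le))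
      fun x hx => by simp [hdu0 x hx, Real.zero_rpow hp0.ne']
  have iI : Integrable fun x => ρ x ^ (a + 1) * (|u x| ^ (p - 1) * |fderiv ℝ u x (b x)|) :=
    hinteg ((hρc _).mul ((hus.continuous.abs.rpow_const
      fun x => Or.inr (by linarith)).continuousOn.mul hdub.abs)) fun x hx => by simp [hdu0 x hx]
  -- Young's inequality with `t = |u|` and `s = ρ |b · ∇u| / k`, the scaling for which the
  -- terms with `∫ ρ^a |u|^p` combine to exactly `(1/p) ∫ ρ^a |u|^p`
  have hpt : ∀ x, ρ x ^ (a + 1) * (|u x| ^ (p - 1) * |fderiv ℝ u x (b x)|) ≤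
      k * (1 - 1 / p) * (ρ x ^ a * |u x| ^ p) +
        k * (1 / p) / k ^ p * (ρ x ^ (a + p) * |fderiv ℝ u x (b x)| ^ p) := by
    intro x
    by_cases hx : x ∈ tsupport u
    · have hr := hρpos x (huΩ hx)
      have hy := young_aux hp (s := ρ x * |fderiv ℝ u x (b x)| / k) (t := |u x|)
        (by positivity) (abs_nonneg _)
      rw [Real.div_rpow (by positivity) hkpos.le, Real.mul_rpow hr.le (abs_nonneg _)] at hy
      have hy' := mul_le_mul_of_nonneg_left hy (by positivity : 0 ≤ k * ρ x ^ a)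
      rw [Real.rpow_add_one hr.ne', Real.rpow_add hr]
      calc _ = k * ρ x ^ a * (|u x| ^ (p - 1) * (ρ x * |fderiv ℝ u x (b x)| / k)) := by
            field_simp
        _ ≤ _ := hy'
        _ = _ := by ring
    · simp [hu0 x hx, hdu0 x hx, Real.zero_rpow hp0.ne']
  have hI := integral_mono iI ((iA.const_mul _).add (iB.const_mul _)) hpt
  simp only [Pi.add_apply] at hI
  rw [integral_add (iA.const_mul _) (iB.const_mul _), integral_const_mul, integral_const_mul] at hI
  set A := ∫ x, ρ x ^ a * |u x| ^ p
  set B := ∫ x, ρ x ^ (a + p) * |fderiv ℝ u x (b x)| ^ p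
  have hkA : k * A ≤ k * (1 - 1 / p) * A + k * (1 / p) / k ^ p * B := by
    refine le_trans ?_ hI
    rw [hk, div_mul_eq_mul_div, div_le_iff₀ hp0]
    linarith
  have h1 : k * (1 / p) * A ≤ k * (1 / p) * (B / k ^ p) := by
    have : k * (1 / p) / k ^ p * B = k * (1 / p) * (B / k ^ p) := by ring
    linarith
  have h2 : A ≤ B / k ^ p := le_of_mul_le_mul_left h1 (by positivity)
  rw [le_div_iff₀ hkp] at h2
  linarith
end
end

section
/- Let 1 ≤ p < ∞ and let α > −N be a real number. Then for every u ∈ C_c^∞(ℝ^N ∖ {0}), ((N + α)/p)^p · ∫_{ℝ^N} H⁰(x)^α |u(x)|^p dx ≤ ∫_{ℝ^N} H⁰(x)^{α+p} |(x/H⁰(x)) · ∇u(x)|^p dx. -/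
/-!
The Euler operator `x · ∇` generates the dilations, so the inequality is the infinitesimal form
of the scaling law of a weighted `L^p` norm. Write `h = H⁰` and
`‖v‖ = (∫ h^a |v|^p)^(1/p)`. Since `h` is positively one-homogeneous, the dilation
`u_s(x) = u(s x)` satisfies `‖u_s‖ = s^(-(N+a)/p) ‖u‖` (`weighted_integral_dilation`).
Minkowski's inequality (`weighted_minkowski`) gives, for `s > 1`,

`(1 - s^(-(N+a)/p)) / (s - 1) * ‖u‖ ≤ ‖(u_s - u) / (s - 1)‖`.

As `s → 1⁺` the left factor tends to `(N+a)/p`, and the right side tends to `‖x · ∇u‖` by dominated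
convergence: the difference quotients are bounded by the Lipschitz constant of `u` times `|x|`,
and for `1 < s < 2` they are supported in a fixed annulus, where `h^a` is bounded
(`tendsto_weighted_integral_slope`). Finally `h^(a+p) |(x/h) · ∇u|^p = h^a |x · ∇u|^p` pointwise.

The only properties of `H⁰` used are continuity, positivity away from the origin and
homogeneity, all of which follow from its definition as a supremum and from the comparison of `H`
with the Euclidean norm.
-/

open MeasureTheory Set Filter
open scoped RealInnerProductSpace Topology ENNReal NNReal

noncomputable section

/-! ### Elementary properties of the polar norm -/

lemma IsFinslerNorm.pos {N : ℕ} {H : Euc N → ℝ} (hH : IsFinslerNorm H) {ξ : Euc N}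
    (hξ : ξ ≠ 0) : 0 < H ξ := by
  obtain ⟨c, b, hc, -, hb⟩ := hH.bounds
  exact lt_of_lt_of_le (mul_pos hc (norm_pos_iff.2 hξ)) (hb ξ).1

/-- The quotients in the definition of `H⁰` are bounded by a multiple of the Euclidean norm, so
the supremum is a genuine one. -/
lemma exists_quotient_le {N : ℕ} {H : Euc N → ℝ} (hH : IsFinslerNorm H) :
    ∃ C : ℝ, 0 ≤ C ∧ ∀ x ξ : Euc N, ξ ≠ 0 → ⟪ξ, x⟫ / H ξ ≤ C * ‖x‖ := by
  obtain ⟨c, b, hc, -, hb⟩ := hH.bounds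
  refine ⟨c⁻¹, by positivity, fun x ξ hξ => ?_⟩
  rw [div_le_iff₀ (hH.pos hξ)]
  calc ⟪ξ, x⟫ ≤ ‖ξ‖ * ‖x‖ := real_inner_le_norm _ _
    _ = c⁻¹ * ‖x‖ * (c * ‖ξ‖) := by field_simp
    _ ≤ c⁻¹ * ‖x‖ * H ξ := by
      have := (hb ξ).1
      gcongr

lemma quotient_le_polarNorm {N : ℕ} {H : Euc N → ℝ} (hH : IsFinslerNorm H) (x : Euc N)
    {ξ : Euc N} (hξ : ξ ≠ 0) : ⟪ξ, x⟫ / H ξ ≤ polarNorm H x := by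
  obtain ⟨C, -, hC⟩ := exists_quotient_le hH
  refine le_csSup ⟨C * ‖x‖, ?_⟩ ⟨ξ, hξ, rfl⟩
  rintro _ ⟨η, hη, rfl⟩
  exact hC x η hη

lemma polarNorm_le {N : ℕ} (hN : 2 ≤ N) {H : Euc N → ℝ} (x : Euc N) {M : ℝ}
    (h : ∀ ξ : Euc N, ξ ≠ 0 → ⟪ξ, x⟫ / H ξ ≤ M) : polarNorm H x ≤ M := by
  have : NeZero N := ⟨by omega⟩
  obtain ⟨ξ, hξ⟩ := exists_ne (0 : Euc N)
  refine csSup_le ⟨_, ξ, hξ, rfl⟩ ?_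
  rintro _ ⟨η, hη, rfl⟩
  exact h η hη

lemma polarNorm_pos {N : ℕ} {H : Euc N → ℝ} (hH : IsFinslerNorm H) (x : Euc N)
    (hx : x ≠ 0) : 0 < polarNorm H x :=
  lt_of_lt_of_le (div_pos (real_inner_self_pos.2 hx) (hH.pos hx))
    (quotient_le_polarNorm hH x hx)

lemma polarNorm_smul_le {N : ℕ} (hN : 2 ≤ N) {H : Euc N → ℝ} (hH : IsFinslerNorm H)
    {t : ℝ} (ht : 0 < t) (x : Euc N) : polarNorm H (t • x) ≤ t * polarNorm H x := by
  refine polarNorm_le hN _ fun ξ hξ => ?_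
  rw [inner_smul_right, mul_div_assoc]
  exact mul_le_mul_of_nonneg_left (quotient_le_polarNorm hH x hξ) ht.le

lemma polarNorm_smul {N : ℕ} (hN : 2 ≤ N) {H : Euc N → ℝ} (hH : IsFinslerNorm H)
    (t : ℝ) (ht : 0 < t) (x : Euc N) : polarNorm H (t • x) = t * polarNorm H x := by
  refine le_antisymm (polarNorm_smul_le hN hH ht x) ?_
  have := polarNorm_smul_le hN hH (inv_pos.2 ht) (t • x)
  rw [inv_smul_smul₀ ht.ne'] at this
  rwa [← le_inv_mul_iff₀ ht]

/-- `H⁰` is subadditive and bounded by a multiple of the Euclidean norm, hence Lipschitz. -/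
lemma continuous_polarNorm {N : ℕ} (hN : 2 ≤ N) {H : Euc N → ℝ} (hH : IsFinslerNorm H) :
    Continuous (polarNorm H) := by
  obtain ⟨C, hC0, hC⟩ := exists_quotient_le hH
  refine (LipschitzWith.of_le_add_mul' C fun x y => ?_).continuous
  refine polarNorm_le hN _ fun ξ hξ => ?_
  have h1 := quotient_le_polarNorm hH y hξ
  have h2 := hC (x - y) ξ hξ
  rw [dist_eq_norm]
  calc ⟪ξ, x⟫ / H ξ = ⟪ξ, y⟫ / H ξ + ⟪ξ, x - y⟫ / H ξ := by rw [inner_sub_right]; ring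
    _ ≤ _ := add_le_add h1 h2

/-! ### The weighted `L^p` norm and dilations -/

/-- Minkowski's inequality for the weight `h^a`, for continuous functions supported in an
annulus; the weight is absorbed as a factor `h^(a/p)`, which may be singular only at the origin. -/
lemma weighted_minkowski {N : ℕ} {h : Euc N → ℝ} (hc : Continuous h)
    (hpos : ∀ x, x ≠ 0 → 0 < h x) {p : ℝ} (hp : 1 ≤ p) (a : ℝ) {r R : ℝ} (hr : 0 < r)
    {v w : Euc N → ℝ} (hv : Continuous v) (hw : Continuous w)
    (hvs : ∀ x, v x ≠ 0 → r ≤ ‖x‖ ∧ ‖x‖ ≤ R) (hws : ∀ x, w x ≠ 0 → r ≤ ‖x‖ ∧ ‖x‖ ≤ R) :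
    (∫ x, h x ^ a * |v x| ^ p) ^ p⁻¹
      ≤ (∫ x, h x ^ a * |w x| ^ p) ^ p⁻¹ + (∫ x, h x ^ a * |v x - w x| ^ p) ^ p⁻¹ := by
  have hp0 : 0 < p := by linarith
  have memLp : ∀ f : Euc N → ℝ, Continuous f → (∀ x, f x ≠ 0 → r ≤ ‖x‖ ∧ ‖x‖ ≤ R) →
      MemLp (fun x => h x ^ (a / p) * f x) (ENNReal.ofReal p) volume := by
    intro f hf hfs
    refine Continuous.memLp_of_hasCompactSupport ?_ ?_
    · rw [continuous_iff_continuousAt]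
      intro x
      by_cases hx : x = 0
      · have : (fun x => h x ^ (a / p) * f x) =ᶠ[𝓝 x] fun _ => 0 := by
          subst hx
          filter_upwards [Metric.ball_mem_nhds (0 : Euc N) hr] with y hy
          have : f y = 0 := by
            by_contra hne
            have := (hfs y hne).1
            rw [mem_ball_zero_iff] at hy
            linarith
          simp [this]
        exact continuousAt_const.congr this.symm
      · exact (hc.continuousAt.rpow_const (Or.inl (hpos x hx).ne')).mul hf.continuousAt
    · refine HasCompactSupport.intro (isCompact_closedBall (0 : Euc N) R) fun x hx => ?_
      have : f x = 0 := by
        by_contra hne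
        exact hx (mem_closedBall_zero_iff.2 (hfs x hne).2)
      simp [this]
  have norm_eq : ∀ f : Euc N → ℝ, (hf : Continuous f) →
      (hfs : ∀ x, f x ≠ 0 → r ≤ ‖x‖ ∧ ‖x‖ ≤ R) →
      lpNorm (fun x => h x ^ (a / p) * f x) (ENNReal.ofReal p) volume
        = (∫ x, h x ^ a * |f x| ^ p) ^ p⁻¹ := by
    intro f hf hfs
    rw [lpNorm_eq_integral_norm_rpow_toReal (by simpa using hp0) ENNReal.ofReal_ne_top
      (memLp f hf hfs).1, ENNReal.toReal_ofReal hp0.le]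
    congr 2
    ext x
    rw [Real.norm_eq_abs, abs_mul, Real.mul_rpow (abs_nonneg _) (abs_nonneg _)]
    by_cases hx : x = 0
    · have : f x = 0 := by
        by_contra hne
        have := (hfs x hne).1
        rw [hx, norm_zero] at this
        linarith
      simp [this, Real.zero_rpow hp0.ne']
    · have hh := hpos x hx
      rw [abs_of_nonneg (Real.rpow_nonneg hh.le _), ← Real.rpow_mul hh.le,
        div_mul_cancel₀ _ hp0.ne']
  have hsub : ∀ x, v x - w x ≠ 0 → r ≤ ‖x‖ ∧ ‖x‖ ≤ R := by
    intro x hx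
    by_cases h0 : v x = 0
    · exact hws x fun h1 => hx (by rw [h0, h1, sub_zero])
    · exact hvs x h0
  rw [← norm_eq v hv hvs, ← norm_eq w hw hws, ← norm_eq (fun x => v x - w x) (hv.sub hw) hsub]
  have hp1 : (1 : ℝ≥0∞) ≤ ENNReal.ofReal p := by simpa using hp
  have key := lpNorm_le_lpNorm_add_lpNorm_sub' (f := fun x => h x ^ (a / p) * v x)
    (memLp w hw hws) hp1
  refine key.trans_eq ?_
  congr 2
  ext x
  simp [mul_sub]

lemma weighted_integral_dilation {N : ℕ} {h : Euc N → ℝ}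
    (hhom : ∀ t : ℝ, 0 < t → ∀ x, h (t • x) = t * h x) (hnn : ∀ x, 0 ≤ h x)
    (p a : ℝ) (u : Euc N → ℝ) {s : ℝ} (hs : 0 < s) :
    ∫ x, h x ^ a * |u (s • x)| ^ p
      = s ^ (-((N : ℝ) + a)) * ∫ x, h x ^ a * |u x| ^ p := by
  have e : ∀ x, h x ^ a * |u (s • x)| ^ p
      = s ^ (-a) * (h (s • x) ^ a * |u (s • x)| ^ p) := by
    intro x
    rw [hhom s hs, Real.mul_rpow hs.le (hnn x), Real.rpow_neg hs.le]
    have := (Real.rpow_pos_of_pos hs a).ne'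
    field_simp
  simp_rw [e]
  rw [integral_const_mul, Measure.integral_comp_smul_of_nonneg (hR := hs.le) volume
    (fun x => h x ^ a * |u x| ^ p) s, finrank_euclideanSpace_fin, smul_eq_mul, ← mul_assoc]
  congr 1
  rw [neg_add, Real.rpow_add hs, Real.rpow_neg hs.le (N : ℝ), Real.rpow_natCast, mul_comm]

/-- A compact subset of the punctured space lies in an annulus. -/
lemma IsTestFun.exists_annulus {N : ℕ} {u : Euc N → ℝ} (hu : IsTestFun {(0 : Euc N)}ᶜ u) :
    ∃ r R : ℝ, 0 < r ∧ ∀ x, u x ≠ 0 → r ≤ ‖x‖ ∧ ‖x‖ ≤ R := by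
  obtain ⟨-, hcs, hsupp⟩ := hu
  obtain ⟨R, hR⟩ := hcs.isCompact.isBounded.exists_norm_le
  have h0 : (tsupport u)ᶜ ∈ 𝓝 (0 : Euc N) :=
    (isClosed_tsupport u).isOpen_compl.mem_nhds fun h => hsupp h rfl
  obtain ⟨r, hr, hball⟩ := Metric.mem_nhds_iff.1 h0
  refine ⟨r, R, hr, fun x hx => ⟨?_, hR x (subset_tsupport u hx)⟩⟩
  by_contra! hlt
  exact hball (mem_ball_zero_iff.2 hlt) (subset_tsupport u hx)

lemma dilation_support {N : ℕ} {u : Euc N → ℝ} {r R : ℝ} (hr : 0 < r)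
    (hsupp : ∀ x, u x ≠ 0 → r ≤ ‖x‖ ∧ ‖x‖ ≤ R) {s : ℝ} (h1 : 1 ≤ s) (h2 : s ≤ 2)
    (x : Euc N) (hx : u (s • x) ≠ 0) : r / 2 ≤ ‖x‖ ∧ ‖x‖ ≤ R := by
  have := hsupp _ hx
  rw [norm_smul, Real.norm_of_nonneg (by linarith)] at this
  constructor <;> nlinarith [norm_nonneg x]

/-- The difference quotients of `s ↦ u (s x)` at `s = 1` converge to `x · ∇u` in the weighted
`L^p` sense. -/
lemma tendsto_weighted_integral_slope {N : ℕ} {h : Euc N → ℝ} (hc : Continuous h)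
    (hpos : ∀ x, x ≠ 0 → 0 < h x) (hnn : ∀ x, 0 ≤ h x) {p : ℝ} (hp : 1 ≤ p) (a : ℝ)
    {u : Euc N → ℝ} (hu : IsTestFun {(0 : Euc N)}ᶜ u) :
    Tendsto (fun s : ℝ => ∫ x, h x ^ a * |(s - 1)⁻¹ * (u (s • x) - u x)| ^ p) (𝓝[>] 1)
      (𝓝 (∫ x, h x ^ a * |⟪x, gradient u x⟫| ^ p)) := by
  have hp0 : 0 < p := by linarith
  obtain ⟨r, R, hr, hsupp⟩ := hu.exists_annulus
  obtain ⟨hsm, hcs, -⟩ := hu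
  obtain ⟨K, hK⟩ := ContDiff.lipschitzWith_of_hasCompactSupport hcs hsm (by simp)
  set A : Set (Euc N) := {x | r / 2 ≤ ‖x‖} ∩ Metric.closedBall 0 R with hA
  have hAc : IsCompact A :=
    (isCompact_closedBall (0 : Euc N) R).inter_left (isClosed_le continuous_const continuous_norm)
  have hA0 : ∀ x ∈ A, x ≠ 0 := by
    rintro x ⟨hx, -⟩ rfl
    simp only [mem_ofPred_eq, norm_zero] at hx
    linarith
  refine tendsto_integral_filter_of_dominated_convergence
    (A.indicator fun x => h x ^ a * (K * ‖x‖) ^ p) ?_ ?_ ?_ ?_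
  · refine Eventually.of_forall fun s => ?_
    have h1 : Measurable h := hc.measurable
    have h2 : Measurable u := hsm.continuous.measurable
    have h3 : Measurable fun x => u (s • x) :=
      (hsm.continuous.comp (continuous_const_smul s)).measurable
    refine Measurable.aestronglyMeasurable ?_
    fun_prop
  · have h2 : ∀ᶠ s : ℝ in 𝓝[>] 1, s < 2 :=
      mem_nhdsWithin_of_mem_nhds (Iio_mem_nhds (by norm_num))
    filter_upwards [h2, self_mem_nhdsWithin] with s hs2 hs1
    have hs1 : 1 < s := hs1
    refine Eventually.of_forall fun x => ?_
    have hs0 : 0 < s - 1 := by linarith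
    by_cases hx : x ∈ A
    · rw [indicator_of_mem hx, Real.norm_of_nonneg
        (mul_nonneg (Real.rpow_nonneg (hnn x) _) (Real.rpow_nonneg (abs_nonneg _) _))]
      refine mul_le_mul_of_nonneg_left ?_ (Real.rpow_nonneg (hnn x) _)
      refine Real.rpow_le_rpow (abs_nonneg _) ?_ hp0.le
      rw [abs_mul, abs_inv, abs_of_pos hs0, inv_mul_le_iff₀ hs0]
      have := hK.dist_le_mul (s • x) x
      rw [Real.dist_eq, dist_eq_norm, show s • x - x = (s - 1) • x by rw [sub_smul, one_smul],
        norm_smul, Real.norm_of_nonneg hs0.le] at this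
      linarith
    · have e1 : u (s • x) = 0 := by
        by_contra hne
        have := dilation_support hr hsupp hs1.le hs2.le x hne
        exact hx ⟨this.1, mem_closedBall_zero_iff.2 this.2⟩
      have e2 : u x = 0 := by
        by_contra hne
        have := hsupp x hne
        exact hx ⟨by simp only [mem_ofPred_eq]; linarith [this.1], mem_closedBall_zero_iff.2 this.2⟩
      simp [indicator_of_notMem hx, e1, e2, Real.zero_rpow hp0.ne']
  · rw [integrable_indicator_iff hAc.measurableSet]
    refine ContinuousOn.integrableOn_compact hAc ?_
    refine ContinuousOn.mul (fun x hx => ?_) (Continuous.continuousOn ?_)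
    · exact (hc.continuousAt.rpow_const (Or.inl (hpos x (hA0 x hx)).ne')).continuousWithinAt
    · exact (continuous_const.mul continuous_norm).rpow_const fun _ => Or.inr hp0.le
  · refine Eventually.of_forall fun x => ?_
    have hd : HasDerivAt (fun s : ℝ => u (s • x)) ⟪x, gradient u x⟫ 1 := by
      have hf : HasFDerivAt u (fderiv ℝ u x) ((1 : ℝ) • x) := by
        rw [one_smul]
        exact (hsm.differentiable (by simp) x).hasFDerivAt
      have hl : HasDerivAt (fun s : ℝ => s • x) x 1 := by
        simpa using (hasDerivAt_id (1 : ℝ)).smul_const x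
      rw [real_inner_comm, inner_gradient_left]
      exact hf.comp_hasDerivAt (1 : ℝ) hl
    have ht := hd.tendsto_slope.mono_left (nhdsWithin_mono (1 : ℝ)
      (fun s (hs : 1 < s) => hs.ne' : Ioi (1 : ℝ) ⊆ {1}ᶜ))
    simp only [slope_fun_def, vsub_eq_sub, smul_eq_mul, one_smul] at ht
    exact (ht.abs.rpow_const (Or.inr hp0.le)).const_mul _

/-- The weighted Hardy–Poincaré inequality for an arbitrary continuous, positively
one-homogeneous weight that is positive away from the origin. -/
lemma hardy_poincare_of_homogeneous {N : ℕ} {h : Euc N → ℝ} (hc : Continuous h)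
    (hpos : ∀ x, x ≠ 0 → 0 < h x) (hnn : ∀ x, 0 ≤ h x)
    (hhom : ∀ t : ℝ, 0 < t → ∀ x, h (t • x) = t * h x)
    {p : ℝ} (hp : 1 ≤ p) {a : ℝ} (ha : -(N : ℝ) < a)
    {u : Euc N → ℝ} (hu : IsTestFun {(0 : Euc N)}ᶜ u) :
    (((N : ℝ) + a) / p) ^ p * ∫ x, h x ^ a * |u x| ^ p
      ≤ ∫ x, h x ^ a * |⟪x, gradient u x⟫| ^ p := by
  have hp0 : 0 < p := by linarith
  have hNa : 0 < (N : ℝ) + a := by linarith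
  set κ : ℝ := ((N : ℝ) + a) / p with hκ
  have hκ0 : 0 < κ := div_pos hNa hp0
  have int_nonneg : ∀ f : Euc N → ℝ, 0 ≤ ∫ x, h x ^ a * |f x| ^ p := fun f =>
    integral_nonneg fun x =>
      mul_nonneg (Real.rpow_nonneg (hnn x) _) (Real.rpow_nonneg (abs_nonneg _) _)
  set I : ℝ := ∫ x, h x ^ a * |u x| ^ p with hI
  have hI0 : 0 ≤ I := int_nonneg u
  set J : ℝ := ∫ x, h x ^ a * |⟪x, gradient u x⟫| ^ p with hJ
  have hJ0 : 0 ≤ J := int_nonneg _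
  obtain ⟨r, R, hr, hsupp⟩ := hu.exists_annulus
  have quot_le : ∀ s : ℝ, 1 < s → s < 2 → (s - 1)⁻¹ * (1 - s ^ (-κ)) * I ^ p⁻¹
      ≤ (∫ x, h x ^ a * |(s - 1)⁻¹ * (u (s • x) - u x)| ^ p) ^ p⁻¹ := by
    intro s hs1 hs2
    have hs0 : 0 < s - 1 := by linarith
    have hspos : 0 < s := by linarith
    have mink := weighted_minkowski hc hpos hp a (half_pos hr) (R := R)
      hu.1.continuous (hu.1.continuous.comp (continuous_const_smul s))
      (fun x hx => ⟨by linarith [(hsupp x hx).1], (hsupp x hx).2⟩)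
      (fun x hx => dilation_support hr hsupp hs1.le hs2.le x hx)
    simp only [Function.comp_apply] at mink
    rw [weighted_integral_dilation hhom hnn p a u hspos, ← hI,
      Real.mul_rpow (Real.rpow_nonneg hspos.le _) hI0, ← Real.rpow_mul hspos.le,
      show -((N : ℝ) + a) * p⁻¹ = -κ by rw [hκ]; ring] at mink
    have e : ∫ x, h x ^ a * |(s - 1)⁻¹ * (u (s • x) - u x)| ^ p
        = ((s - 1)⁻¹) ^ p * ∫ x, h x ^ a * |u x - u (s • x)| ^ p := by
      rw [← integral_const_mul]
      congr 1
      ext x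
      rw [abs_mul, Real.mul_rpow (abs_nonneg _) (abs_nonneg _), abs_of_pos (inv_pos.2 hs0),
        abs_sub_comm (u x)]
      ring
    rw [e, Real.mul_rpow (Real.rpow_nonneg (inv_pos.2 hs0).le _) (int_nonneg _),
      Real.rpow_rpow_inv (inv_pos.2 hs0).le hp0.ne', mul_assoc]
    refine mul_le_mul_of_nonneg_left ?_ (inv_pos.2 hs0).le
    linarith
  have lim_left : Tendsto (fun s : ℝ => (s - 1)⁻¹ * (1 - s ^ (-κ)) * I ^ p⁻¹) (𝓝[>] 1)
      (𝓝 (κ * I ^ p⁻¹)) := by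
    have hd : HasDerivAt (fun s : ℝ => -s ^ (-κ)) κ 1 := by
      simpa using (Real.hasDerivAt_rpow_const (x := 1) (p := -κ) (Or.inl one_ne_zero)).fun_neg
    have ht := hd.tendsto_slope.mono_left (nhdsWithin_mono (1 : ℝ)
      (fun s (hs : 1 < s) => hs.ne' : Ioi (1 : ℝ) ⊆ {1}ᶜ))
    refine Tendsto.mul_const _ (ht.congr fun s => ?_)
    simp only [slope_fun_def, vsub_eq_sub, smul_eq_mul, Real.one_rpow]
    ring
  have lim_right := (tendsto_weighted_integral_slope hc hpos hnn hp a hu).rpow_const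
    (p := p⁻¹) (Or.inr (inv_pos.2 hp0).le)
  have main : κ * I ^ p⁻¹ ≤ J ^ p⁻¹ := by
    refine le_of_tendsto_of_tendsto lim_left lim_right ?_
    have h2 : ∀ᶠ s : ℝ in 𝓝[>] 1, s < 2 :=
      mem_nhdsWithin_of_mem_nhds (Iio_mem_nhds (by norm_num))
    filter_upwards [h2, self_mem_nhdsWithin] with s hs2 hs1
    exact quot_le s hs1 hs2
  have := Real.rpow_le_rpow (mul_nonneg hκ0.le (Real.rpow_nonneg hI0 _)) main hp0.le
  rwa [Real.mul_rpow hκ0.le (Real.rpow_nonneg hI0 _), Real.rpow_inv_rpow hI0 hp0.ne',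
    Real.rpow_inv_rpow hJ0 hp0.ne'] at this

/-- Weighted anisotropic Hardy-Poincaré inequality with the weight H⁰(x). -/
theorem finsler_weighted_hardy_poincare_polar
    (N : ℕ) (hN : 2 ≤ N) (H : Euc N → ℝ) (hH : IsFinslerNorm H)
    (p : ℝ) (hp : 1 ≤ p)
    (a : ℝ) (ha : -(N : ℝ) < a)
    (u : Euc N → ℝ) (hu : IsTestFun {(0 : Euc N)}ᶜ u) :
    (((N : ℝ) + a) / p) ^ p * ∫ x, polarNorm H x ^ a * |u x| ^ p
      ≤ ∫ x, polarNorm H x ^ (a + p) *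
          |⟪(polarNorm H x)⁻¹ • x, gradient u x⟫| ^ p := by
  have hp0 : 0 < p := by linarith
  have hnn : ∀ x, 0 ≤ polarNorm H x := by
    intro x
    by_cases hx : x = 0
    · subst hx
      have : NeZero N := ⟨by omega⟩
      obtain ⟨ξ, hξ⟩ := exists_ne (0 : Euc N)
      simpa using quotient_le_polarNorm hH 0 hξ
    · exact (polarNorm_pos hH x hx).le
  refine (hardy_poincare_of_homogeneous (continuous_polarNorm hN hH) (polarNorm_pos hH) hnn
    (polarNorm_smul hN hH) hp ha hu).trans_eq ?_
  congr 1
  ext x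
  by_cases hx : x = 0
  · simp [hx, Real.zero_rpow hp0.ne']
  · have hh := polarNorm_pos hH x hx
    rw [real_inner_smul_left, abs_mul, Real.mul_rpow (abs_nonneg _) (abs_nonneg _),
      abs_of_pos (inv_pos.2 hh), Real.inv_rpow hh.le, Real.rpow_add hh]
    have := (Real.rpow_pos_of_pos hh p).ne'
    field_simp
end
end

section
/- Let N ≥ 2 and let ρ ∈ C¹(ℝ^N ∖ {0}) be positive and locally bounded on ℝ^N, with H(∇ρ(x)) = 1 for all x ≠ 0. Assume Δ_H ρ ≥ C/ρ in the distributional sense on ℝ^N for some constant C > 0, i.e. 1/ρ ∈ L¹_loc(ℝ^N) and −∫ (∇_ξ H)(∇ρ(x)) · ∇φ(x) dx ≥ ∫ (C/ρ(x)) φ(x) dx for every nonnegative φ ∈ C_c^∞(ℝ^N). Then for every u ∈ C_c^∞(ℝ^N), ((C + 1)/2)² · ( ∫_{ℝ^N} |u(x)|² dx )² ≤ ( ∫_{ℝ^N} ρ(x)² |u(x)|² dx ) · ( ∫_{ℝ^N} |(∇_ξ H)(∇ρ(x)) · ∇u(x)|² dx ). -/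
/-!
Put `X = (∇_ξ H)(∇ρ)`. It is bounded because `H` is Lipschitz (`finsler_gradient_bound`), and
Euler's identity (`finsler_euler`) with `H(∇ρ) = 1` gives `X · ∇ρ = 1` off the origin. Testing the
inequality `C / ρ ≤ div X` with `ρ u²` yields

  `C ∫ u² ≤ -∫ X · ∇(ρ u²) = -∫ u² - 2 ∫ ρ u (X · ∇u)`,

and the Cauchy–Schwarz inequality for `(C + 1) ∫ u² ≤ -2 ∫ ρ u (X · ∇u)` is the claim.

The function `ρ u²` is not smooth, so two approximations are needed. Mollification extends the
hypothesis to nonnegative `C¹` test functions of compact support (`super_C1`). Multiplication by a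
cutoff `χ n` that vanishes near the origin makes `χ n ρ u²` such a function; the error
`∫ ρ u² (X · ∇(χ n))` is at most a constant times `n` times the volume of a ball of radius of order
`1 / n`, and tends to zero since `N ≥ 2` and `ρ` is locally bounded (`tendsto_capacity`). The limit
is `integral_sq_le`.
-/

open MeasureTheory Set Filter
open scoped RealInnerProductSpace Topology ENNReal NNReal

noncomputable section

/-! ### Mollification: from smooth to `C¹` test functions -/

/-- Mollifications at scale at most one of a continuous compactly supported function are bounded
by a fixed constant on a fixed compact set, which gives the majorant for dominated convergence. -/
lemma mollify_bound {N : ℕ} {F : Type*} [NormedAddCommGroup F] [NormedSpace ℝ F]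
    [CompleteSpace F] {g : Euc N → F} (hg : Continuous g) (hgc : HasCompactSupport g) :
    ∃ (M : ℝ) (K : Set (Euc N)), IsCompact K ∧ ∀ f : ContDiffBump (0 : Euc N), f.rOut ≤ 1 →
      ∀ x, ‖(convolution (f.normed volume) g (ContinuousLinearMap.lsmul ℝ ℝ) volume) x‖
        ≤ K.indicator (fun _ => M) x := by
  obtain ⟨S, hS⟩ := hgc.exists_bound_of_continuous hg
  refine ⟨3 * S, Metric.cthickening 1 (tsupport g), hgc.isCompact.cthickening, fun f hf x => ?_⟩
  by_cases hx : x ∈ Metric.cthickening 1 (tsupport g)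
  · rw [indicator_of_mem hx]
    have h := f.dist_normed_convolution_le (μ := volume) (x₀ := x) (ε := 2 * S)
      hg.aestronglyMeasurable (fun y _ => by
        rw [dist_eq_norm]
        linarith [norm_sub_le (g y) (g x), hS y, hS x])
    rw [dist_eq_norm] at h
    have h2 := norm_le_norm_add_norm_sub' ((convolution (f.normed volume) g
      (ContinuousLinearMap.lsmul ℝ ℝ) volume) x) (g x)
    linarith [hS x]
  · rw [indicator_of_notMem hx]
    have hz : ∀ y ∈ Metric.ball x f.rOut, g y = 0 := fun y hy => by
      by_contra h
      refine hx (Metric.mem_cthickening_of_dist_le x y 1 _ (subset_tsupport g h) ?_)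
      rw [dist_comm]
      exact (Metric.mem_ball.1 hy).le.trans hf
    have hx0 := hz x (Metric.mem_ball_self f.rOut_pos)
    rw [f.normed_convolution_eq_right (μ := volume) (fun y hy => by rw [hz y hy, hx0]), hx0,
      norm_zero]

lemma aesm_clm_apply {N : ℕ} {A : Euc N → (Euc N →L[ℝ] ℝ)} (hA : Continuous A)
    {X : Euc N → Euc N} (hX : AEStronglyMeasurable X volume) :
    AEStronglyMeasurable (fun x => A x (X x)) volume :=
  (ContinuousLinearMap.id ℝ (Euc N →L[ℝ] ℝ)).aestronglyMeasurable_comp₂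
    hA.aestronglyMeasurable hX

/-- The distributional inequality `w ≤ div X`, with `X` bounded and `w` locally integrable, extends
from smooth to `C¹` nonnegative test functions of compact support. -/
lemma super_C1 {N : ℕ} {w : Euc N → ℝ} (hw : LocallyIntegrable w volume)
    {X : Euc N → Euc N} (hX : AEStronglyMeasurable X volume) {B : ℝ} (hB : ∀ x, ‖X x‖ ≤ B)
    (h : ∀ φ : Euc N → ℝ, IsTestFun (univ : Set (Euc N)) φ → (∀ x, 0 ≤ φ x) →
      ∫ x, w x * φ x ≤ -∫ x, fderiv ℝ φ x (X x))
    {ψ : Euc N → ℝ} (hψ : ContDiff ℝ 1 ψ) (hψc : HasCompactSupport ψ) (hψ0 : ∀ x, 0 ≤ ψ x) :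
    ∫ x, w x * ψ x ≤ -∫ x, fderiv ℝ ψ x (X x) := by
  -- bump functions with radii shrinking to zero, as mollifiers
  let f : ℕ → ContDiffBump (0 : Euc N) := fun n =>
    ⟨1 / (2 * ((n : ℝ) + 1)), 1 / ((n : ℝ) + 1), by positivity, by
      apply one_div_lt_one_div_of_lt <;> [positivity; linarith [n.cast_nonneg (α := ℝ)]]⟩
  have hf1 : ∀ n, (f n).rOut ≤ 1 := fun n => by
    change 1 / ((n : ℝ) + 1) ≤ 1
    rw [div_le_one (by positivity)]; linarith [n.cast_nonneg (α := ℝ)]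
  have hf0 : Tendsto (fun n => (f n).rOut) atTop (𝓝 0) := tendsto_one_div_add_atTop_nhds_zero_nat
  let c : ℕ → Euc N → ℝ := fun n =>
    convolution ((f n).normed volume) ψ (ContinuousLinearMap.lsmul ℝ ℝ) volume
  let d : ℕ → Euc N → (Euc N →L[ℝ] ℝ) := fun n =>
    convolution ((f n).normed volume) (fderiv ℝ ψ) (ContinuousLinearMap.lsmul ℝ ℝ) volume
  have hψ' : Continuous (fderiv ℝ ψ) := hψ.continuous_fderiv one_ne_zero
  have hli : ∀ n, LocallyIntegrable ((f n).normed volume) (volume : Measure (Euc N)) := fun n =>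
    (f n).continuous_normed.locallyIntegrable
  have hcd : ∀ n x, fderiv ℝ (c n) x = d n x := fun n x => by
    have h1 := hψc.hasFDerivAt_convolution_right (ContinuousLinearMap.lsmul ℝ ℝ) (μ := volume)
      (hli n) hψ x
    rw [h1.fderiv]
    rfl
  have hcs : ∀ n, ContDiff ℝ (⊤ : ℕ∞) (c n) := fun n =>
    (f n).hasCompactSupport_normed.contDiff_convolution_left _ (f n).contDiff_normed
      hψ.continuous.locallyIntegrable
  have hineq : ∀ n, ∫ x, w x * c n x ≤ -∫ x, d n x (X x) := fun n => by
    have := h (c n) ⟨hcs n, (f n).hasCompactSupport_normed.convolution _ hψc, subset_univ _⟩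
      (fun x => integral_nonneg fun t => by
        simpa using mul_nonneg ((f n).nonneg_normed t) (hψ0 _))
    simpa only [hcd] using this
  obtain ⟨M, K, hK, hM⟩ := mollify_bound hψ.continuous hψc
  obtain ⟨M', K', hK', hM'⟩ := mollify_bound hψ' (hψc.fderiv ℝ)
  have hB0 : 0 ≤ B := (norm_nonneg _).trans (hB 0)
  have L1 : Tendsto (fun n => ∫ x, w x * c n x) atTop (𝓝 (∫ x, w x * ψ x)) := by
    refine tendsto_integral_of_dominated_convergence (fun x => K.indicator (fun x => ‖w x‖ * M) x)
      (fun n => hw.aestronglyMeasurable.mul (hcs n).continuous.aestronglyMeasurable) ?_ ?_ ?_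
    · rw [integrable_indicator_iff hK.measurableSet]
      exact (hw.integrableOn_isCompact hK).norm.mul_const M
    · refine fun n => ae_of_all _ fun x => ?_
      rw [norm_mul]
      refine (mul_le_mul_of_nonneg_left (hM (f n) (hf1 n) x) (norm_nonneg _)).trans (le_of_eq ?_)
      by_cases hx : x ∈ K <;> simp [hx]
    · exact ae_of_all _ fun x => (ContDiffBump.convolution_tendsto_right_of_continuous hf0
        hψ.continuous x).const_mul _
  have L2 : Tendsto (fun n => ∫ x, d n x (X x)) atTop (𝓝 (∫ x, fderiv ℝ ψ x (X x))) := by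
    refine tendsto_integral_of_dominated_convergence (fun x => K'.indicator (fun x => M' * B) x)
      (fun n => ?_) ?_ ?_ ?_
    · have hdc : Continuous (d n) := by
        have := (hcs n).continuous_fderiv (by simp)
        rwa [funext (hcd n)] at this
      exact aesm_clm_apply hdc hX
    · rw [integrable_indicator_iff hK'.measurableSet]
      exact integrableOn_const hK'.measure_lt_top.ne
    · refine fun n => ae_of_all _ fun x => ?_
      refine ((d n x).le_opNorm _).trans ((mul_le_mul (hM' (f n) (hf1 n) x) (hB x)
        (norm_nonneg _) ((norm_nonneg _).trans (hM' (f n) (hf1 n) x))).trans (le_of_eq ?_))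
      by_cases hx : x ∈ K' <;> simp [hx]
    · exact ae_of_all _ fun x => ((ContinuousLinearMap.apply ℝ ℝ (X x)).continuous.tendsto _).comp
        (ContDiffBump.convolution_tendsto_right_of_continuous hf0 hψ' x)
  exact le_of_tendsto_of_tendsto' L1 L2.neg hineq

/-! ### Finsler norms -/

/-- Convexity and homogeneity make `H` subadditive, hence Lipschitz, so its gradient is bounded. -/
lemma finsler_gradient_bound {N : ℕ} {H : Euc N → ℝ} (hH : IsFinslerNorm H) :
    ∃ B : ℝ, 0 ≤ B ∧ ∀ ξ, ‖gradient H ξ‖ ≤ B := by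
  obtain ⟨a, b, ha, hab, hb⟩ := hH.bounds
  have hb0 : 0 ≤ b := ha.le.trans hab
  refine ⟨b, hb0, fun ξ => ?_⟩
  have hsub : ∀ x y, H (x + y) ≤ H x + H y := fun x y => by
    have h1 : H ((1 / 2 : ℝ) • x + (1 / 2 : ℝ) • y) ≤ (1 / 2 : ℝ) • H x + (1 / 2 : ℝ) • H y :=
      hH.convexOn.2 (mem_univ x) (mem_univ y) (by norm_num) (by norm_num) (by norm_num)
    have h2 := hH.homog (1 / 2) (x + y)
    rw [smul_add] at h2
    rw [h2] at h1
    norm_num at h1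
    linarith
  have hl : LipschitzWith ⟨b, hb0⟩ H := by
    refine LipschitzWith.of_le_add_mul _ fun x y => ?_
    have h1 := hsub y (x - y)
    rw [add_sub_cancel] at h1
    rw [dist_eq_norm]
    exact h1.trans (by gcongr; exact (hb _).2)
  unfold gradient
  rw [LinearIsometryEquiv.norm_map]
  exact norm_fderiv_le_of_lipschitz ℝ hl

/-- Euler's identity for the one-homogeneous function `H`. -/
lemma finsler_euler {N : ℕ} {H : Euc N → ℝ} (hH : IsFinslerNorm H) {ξ : Euc N} (hξ : ξ ≠ 0) :
    ⟪gradient H ξ, ξ⟫ = H ξ := by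
  have hd : DifferentiableAt ℝ H ξ :=
    (hH.smooth.contDiffAt (isOpen_compl_singleton.mem_nhds hξ)).differentiableAt (by norm_num)
  have h1 : HasDerivAt (fun t : ℝ => H (t • ξ)) (fderiv ℝ H ξ ξ) 1 := by
    have h2 : HasDerivAt (fun t : ℝ => t • ξ) ξ 1 := by
      simpa using (hasDerivAt_id (1 : ℝ)).smul_const ξ
    have h3 : HasFDerivAt H (fderiv ℝ H ξ) ((1 : ℝ) • ξ) := by
      rw [one_smul]; exact hd.hasFDerivAt
    exact h3.comp_hasDerivAt 1 h2
  have h4 : HasDerivAt (fun t : ℝ => H (t • ξ)) (H ξ) 1 := by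
    have : HasDerivAt (fun t : ℝ => t * H ξ) (H ξ) 1 := by
      simpa using (hasDerivAt_id (1 : ℝ)).mul_const (H ξ)
    refine this.congr_of_eventuallyEq ?_
    filter_upwards [lt_mem_nhds (zero_lt_one (α := ℝ))] with t ht
    rw [hH.homog, abs_of_pos ht]
  rw [gradient, InnerProductSpace.toDual_symm_apply, h1.unique h4]

/-! ### Functions that are regular away from the origin -/

lemma continuousOn_gradient {N : ℕ} {g : Euc N → ℝ} {n : WithTop ℕ∞} (hn : 1 ≤ n)
    (hg : ContDiffOn ℝ n g {(0 : Euc N)}ᶜ) : ContinuousOn (gradient g) {(0 : Euc N)}ᶜ :=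
  (InnerProductSpace.toDual ℝ (Euc N)).symm.continuous.comp_continuousOn
    (hg.continuousOn_fderiv_of_isOpen isOpen_compl_singleton hn)

/-- In positive dimension the origin is a null set, so continuity off the origin suffices for
measurability. -/
lemma aesm_of_continuousOn {N : ℕ} (hN : 2 ≤ N) {F : Type*} [NormedAddCommGroup F]
    {g : Euc N → F} (hg : ContinuousOn g {(0 : Euc N)}ᶜ) :
    AEStronglyMeasurable g volume := by
  have : Nonempty (Fin N) := ⟨⟨0, by omega⟩⟩
  have h := hg.aestronglyMeasurable (μ := volume) isOpen_compl_singleton.measurableSet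
  rwa [Measure.restrict_eq_self_of_ae_mem (s := {(0 : Euc N)}ᶜ)
    (Measure.ae_ne volume (0 : Euc N))] at h

lemma integrable_of_bound {N : ℕ} (hN : 2 ≤ N) {g : Euc N → ℝ} {K : Set (Euc N)}
    (hK : IsCompact K) (hg : AEStronglyMeasurable g volume) {M : ℝ}
    (hb : ∀ x, x ≠ 0 → x ∈ K → ‖g x‖ ≤ M) (h0 : ∀ x, x ∉ K → g x = 0) :
    Integrable g volume := by
  have : Nonempty (Fin N) := ⟨⟨0, by omega⟩⟩
  have h1 : Integrable (K.indicator (fun _ : Euc N => M)) volume := by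
    rw [integrable_indicator_iff hK.measurableSet]
    exact integrableOn_const hK.measure_lt_top.ne
  refine h1.mono' hg ?_
  filter_upwards [Measure.ae_ne volume (0 : Euc N)] with x hx
  by_cases hxK : x ∈ K
  · simpa [hxK] using hb x hx hxK
  · simp [hxK, h0 x hxK]

/-! ### Cutting off the origin -/

/-- Cutoffs `χ n` vanishing near the origin, equal to one outside the ball of radius `2 / (n + 1)`,
with gradient of order `n + 1`. -/
lemma exists_cutoff (N : ℕ) : ∃ (D : ℝ) (χ : ℕ → Euc N → ℝ), 0 ≤ D ∧ ∀ n,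
    ContDiff ℝ 1 (χ n) ∧ (∀ x, 0 ≤ χ n x ∧ χ n x ≤ 1) ∧ (χ n =ᶠ[𝓝 0] fun _ => 0) ∧
    (∀ x, ‖fderiv ℝ (χ n) x‖ ≤ D * ((n : ℝ) + 1)) ∧
    ∀ x, x ∉ Metric.closedBall (0 : Euc N) (2 / ((n : ℝ) + 1)) →
      χ n x = 1 ∧ fderiv ℝ (χ n) x = 0 := by
  let f : ContDiffBump (0 : Euc N) := ⟨1, 2, one_pos, one_lt_two⟩
  have hfs : ContDiff ℝ 1 f := f.contDiff
  obtain ⟨D, hD⟩ := (f.hasCompactSupport.fderiv ℝ).exists_bound_of_continuous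
    (hfs.continuous_fderiv one_ne_zero)
  refine ⟨D, fun n x => 1 - f (((n : ℝ) + 1) • x), (norm_nonneg _).trans (hD 0), fun n => ?_⟩
  have hn : (0 : ℝ) < (n : ℝ) + 1 := by positivity
  have hc : ContDiff ℝ 1 (fun x : Euc N => 1 - f (((n : ℝ) + 1) • x)) :=
    contDiff_const.sub (hfs.comp (contDiff_const_smul _))
  have hone : ∀ x, x ∉ Metric.closedBall (0 : Euc N) (2 / ((n : ℝ) + 1)) →
      1 - f (((n : ℝ) + 1) • x) = 1 := fun x hx => by
    rw [f.zero_of_le_dist, sub_zero]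
    change 2 ≤ _
    rw [Metric.mem_closedBall, not_le, dist_zero_right, div_lt_iff₀ hn] at hx
    rw [dist_zero_right, norm_smul, Real.norm_of_nonneg hn.le]
    linarith
  refine ⟨hc, fun x => ⟨sub_nonneg.2 f.le_one, sub_le_self _ f.nonneg⟩, ?_, fun x => ?_,
    fun x hx => ⟨hone x hx, ?_⟩⟩
  · have hcont : Tendsto (fun x : Euc N => ((n : ℝ) + 1) • x) (𝓝 0) (𝓝 0) := by
      have : Continuous (fun x : Euc N => ((n : ℝ) + 1) • x) := by fun_prop
      simpa using this.tendsto 0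
    filter_upwards [hcont.eventually (Metric.closedBall_mem_nhds 0 one_pos)] with x hx
    rw [f.one_of_mem_closedBall hx, sub_self]
  · have h1 : HasFDerivAt (fun x : Euc N => 1 - f (((n : ℝ) + 1) • x))
        (-((fderiv ℝ f (((n : ℝ) + 1) • x)).comp
          (((n : ℝ) + 1) • ContinuousLinearMap.id ℝ (Euc N)))) x := by
      have h2 : HasFDerivAt (fun x : Euc N => ((n : ℝ) + 1) • x)
        (((n : ℝ) + 1) • ContinuousLinearMap.id ℝ (Euc N)) x :=
        (hasFDerivAt_id (𝕜 := ℝ) x).const_smul ((n : ℝ) + 1)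
      exact (((hfs.differentiable one_ne_zero).differentiableAt.hasFDerivAt).comp x h2).const_sub 1
    rw [h1.fderiv, ContinuousLinearMap.comp_smul, ContinuousLinearMap.comp_id, norm_neg,
      norm_smul, Real.norm_of_nonneg hn.le, mul_comm]
    gcongr
    exact hD _
  · have h2 : (fun x : Euc N => 1 - f (((n : ℝ) + 1) • x)) =ᶠ[𝓝 x] fun _ => 1 := by
      filter_upwards [Metric.isClosed_closedBall.isOpen_compl.mem_nhds hx] with y hy
      exact hone y hy
    rw [h2.fderiv_eq]
    simp

lemma bddAbove_on_compact {N : ℕ} {ρ : Euc N → ℝ}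
    (hρloc : ∀ x : Euc N, ∃ U ∈ 𝓝 x, BddAbove (ρ '' U)) {K : Set (Euc N)} (hK : IsCompact K) :
    BddAbove (ρ '' K) :=
  hK.induction_on (p := fun s => BddAbove (ρ '' s)) (by simp)
    (fun _ _ hst ht => ht.mono (image_mono hst))
    (fun _ _ hs ht => by rw [image_union]; exact hs.union ht)
    (fun x _ => (hρloc x).imp fun _ h => ⟨mem_nhdsWithin_of_mem_nhds h.1, h.2⟩)

/-- The `L¹` norm of the gradients of the cutoffs is of order `(n + 1) ^ (1 - N)`; it tends to zero
because `N ≥ 2`. -/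
lemma tendsto_capacity {N : ℕ} (hN : 2 ≤ N) (A : ℝ) :
    Tendsto (fun n : ℕ => A * ((n : ℝ) + 1) *
      (volume : Measure (Euc N)).real (Metric.closedBall 0 (2 / ((n : ℝ) + 1)))) atTop (𝓝 0) := by
  have h1 : Tendsto (fun n : ℕ => 1 / ((n : ℝ) + 1)) atTop (𝓝 0) :=
    tendsto_one_div_add_atTop_nhds_zero_nat
  have h2 := ((h1.pow (N - 1)).const_mul
    (A * 2 ^ N * (volume : Measure (Euc N)).real (Metric.closedBall 0 1)))
  rw [zero_pow (by omega), mul_zero] at h2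
  refine h2.congr fun n => ?_
  have hn : (0 : ℝ) < (n : ℝ) + 1 := by positivity
  rw [Measure.addHaar_real_closedBall' (r := 2 / ((n : ℝ) + 1)) _ _ (by positivity), finrank_euclideanSpace_fin]
  obtain ⟨m, rfl⟩ : ∃ m, N = m + 1 := ⟨N - 1, by omega⟩
  rw [Nat.add_sub_cancel, div_pow, div_pow, one_pow, pow_succ ((n : ℝ) + 1)]
  field_simp

/-! ### The integral inequality -/

/-- The inequality `(C + 1) ∫ u² ≤ -2 ∫ ρ u (X · ∇u)`, which results from testing `C / ρ ≤ div X`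
with `ρ u²`, together with the integrability needed for the Cauchy–Schwarz inequality. The value
`ρ 0` is arbitrary, hence the restriction to `x ≠ 0` throughout. -/
lemma integral_sq_le {N : ℕ} (hN : 2 ≤ N) {ρ : Euc N → ℝ} (hρ : ContDiffOn ℝ 1 ρ {(0 : Euc N)}ᶜ)
    (hρpos : ∀ x : Euc N, x ≠ 0 → 0 < ρ x)
    (hρloc : ∀ x : Euc N, ∃ U ∈ 𝓝 x, BddAbove (ρ '' U))
    {X : Euc N → Euc N} (hX : AEStronglyMeasurable X volume) {B : ℝ} (hB : ∀ x, ‖X x‖ ≤ B)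
    (hXρ : ∀ x, x ≠ 0 → fderiv ℝ ρ x (X x) = 1)
    {C : ℝ} (hint : LocallyIntegrable (fun x => 1 / ρ x) volume)
    (hsuper : ∀ φ : Euc N → ℝ, IsTestFun (univ : Set (Euc N)) φ → (∀ x, 0 ≤ φ x) →
      ∫ x, (C / ρ x) * φ x ≤ -∫ x, fderiv ℝ φ x (X x))
    {u : Euc N → ℝ} (hu : ContDiff ℝ 1 u) (huc : HasCompactSupport u) :
    Integrable (fun x => (ρ x * u x) ^ 2) ∧ Integrable (fun x => (fderiv ℝ u x (X x)) ^ 2) ∧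
    Integrable (fun x => (ρ x * u x) * fderiv ℝ u x (X x)) ∧
    (C + 1) * ∫ x, u x ^ 2 ≤ -(2 * ∫ x, (ρ x * u x) * fderiv ℝ u x (X x)) := by
  have : Nonempty (Fin N) := ⟨⟨0, by omega⟩⟩
  have hne : ∀ᵐ x : Euc N, x ≠ 0 := Measure.ae_ne volume (0 : Euc N)
  have hB0 : 0 ≤ B := (norm_nonneg _).trans (hB 0)
  have hu' : Continuous (fderiv ℝ u) := hu.continuous_fderiv one_ne_zero
  obtain ⟨R, hR⟩ := bddAbove_on_compact hρloc huc.isCompact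
  obtain ⟨U, hU⟩ := huc.exists_bound_of_continuous hu.continuous
  obtain ⟨U', hU'⟩ := (huc.fderiv ℝ).exists_bound_of_continuous hu'
  have hU0 : 0 ≤ U := (norm_nonneg _).trans (hU 0)
  have hU'0 : 0 ≤ U' := (norm_nonneg _).trans (hU' 0)
  have hρm : AEStronglyMeasurable ρ volume := aesm_of_continuousOn hN hρ.continuousOn
  have hum : AEStronglyMeasurable u volume := hu.continuous.aestronglyMeasurable
  have htm : AEStronglyMeasurable (fun x => fderiv ℝ u x (X x)) volume :=
    aesm_clm_apply hu' hX
  have hsm : AEStronglyMeasurable (fun x => ρ x * u x) volume := hρm.mul hum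
  have hu0 : ∀ x, x ∉ tsupport u → u x = 0 := fun x hx => image_eq_zero_of_notMem_tsupport hx
  have ht0 : ∀ x, x ∉ tsupport u → fderiv ℝ u x (X x) = 0 := fun x hx => by
    rw [fderiv_of_notMem_tsupport ℝ hx]; rfl
  have hsb : ∀ x, x ≠ 0 → x ∈ tsupport u → |ρ x * u x| ≤ R * U := fun x hx hxK => by
    rw [abs_mul, abs_of_pos (hρpos x hx)]
    have h1 : ρ x ≤ R := hR (mem_image_of_mem _ hxK)
    exact mul_le_mul h1 (hU x) (abs_nonneg _) ((hρpos x hx).le.trans h1)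
  have htb : ∀ x, |fderiv ℝ u x (X x)| ≤ U' * B := fun x =>
    ((fderiv ℝ u x).le_opNorm _).trans (mul_le_mul (hU' x) (hB x) (norm_nonneg _) hU'0)
  have iS : Integrable (fun x => (ρ x * u x) ^ 2) :=
    integrable_of_bound hN huc.isCompact (hsm.pow 2) (M := (R * U) ^ 2)
      (fun x hx hxK => by
        rw [Real.norm_eq_abs, abs_pow]
        exact pow_le_pow_left₀ (abs_nonneg _) (hsb x hx hxK) 2)
      (fun x hx => by simp [hu0 x hx])
  have iT : Integrable (fun x => (fderiv ℝ u x (X x)) ^ 2) :=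
    integrable_of_bound hN huc.isCompact (htm.pow 2) (M := (U' * B) ^ 2)
      (fun x hx hxK => by
        rw [Real.norm_eq_abs, abs_pow]
        exact pow_le_pow_left₀ (abs_nonneg _) (htb x) 2)
      (fun x hx => by simp [ht0 x hx])
  have iQ : Integrable (fun x => (ρ x * u x) * fderiv ℝ u x (X x)) :=
    integrable_of_bound hN huc.isCompact (hsm.mul htm) (M := (R * U) * (U' * B))
      (fun x hx hxK => by
        rw [Real.norm_eq_abs, abs_mul]
        exact mul_le_mul (hsb x hx hxK) (htb x) (abs_nonneg _)
          ((abs_nonneg _).trans (hsb x hx hxK)))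
      (fun x hx => by simp [hu0 x hx])
  have iP : Integrable (fun x => u x ^ 2) :=
    integrable_of_bound hN huc.isCompact (hum.pow 2) (M := U ^ 2)
      (fun x hx hxK => by
        rw [Real.norm_eq_abs, abs_pow]
        exact pow_le_pow_left₀ (abs_nonneg _) (hU x) 2)
      (fun x hx => by simp [hu0 x hx])
  refine ⟨iS, iT, iQ, ?_⟩
  obtain ⟨D, χ, hD0, hχ⟩ := exists_cutoff N
  choose hχs hχb hχ0 hχD hχ1 using hχ
  have hχm : ∀ n, AEStronglyMeasurable (χ n) volume := fun n =>
    (hχs n).continuous.aestronglyMeasurable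
  have iχ : ∀ n {g : Euc N → ℝ}, Integrable g → Integrable (fun x => χ n x * g x) :=
    fun n g hg => hg.mono ((hχm n).mul hg.aestronglyMeasurable) (ae_of_all _ fun x => by
      rw [norm_mul, Real.norm_of_nonneg (hχb n x).1]
      exact mul_le_of_le_one_left (norm_nonneg _) (hχb n x).2)
  have lχ : ∀ {g : Euc N → ℝ}, Integrable g →
      Tendsto (fun n => ∫ x, χ n x * g x) atTop (𝓝 (∫ x, g x)) := fun {g} hg => by
    refine tendsto_integral_of_dominated_convergence (fun x => ‖g x‖)
      (fun n => (iχ n hg).aestronglyMeasurable) hg.norm (fun n => ae_of_all _ fun x => ?_) ?_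
    · rw [norm_mul, Real.norm_of_nonneg (hχb n x).1]
      exact mul_le_of_le_one_left (norm_nonneg _) (hχb n x).2
    · filter_upwards [hne] with x hx
      refine tendsto_const_nhds.congr' ?_
      have h1 : Tendsto (fun n : ℕ => 2 * (1 / ((n : ℝ) + 1))) atTop (𝓝 (2 * 0)) :=
        tendsto_one_div_add_atTop_nhds_zero_nat.const_mul 2
      rw [mul_zero] at h1
      filter_upwards [h1.eventually (gt_mem_nhds (norm_pos_iff.2 hx))] with n hn
      rw [(hχ1 n x _).1, one_mul]
      rw [Metric.mem_closedBall, not_le, dist_zero_right, ← mul_one_div]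
      exact hn
  -- the term of `X · ∇(χ n ρ u²)` in which the derivative falls on the cutoff
  let Z : ℕ → Euc N → ℝ := fun n x => (ρ x * u x * u x) * fderiv ℝ (χ n) x (X x)
  have hZb : ∀ n x, x ≠ 0 → ‖Z n x‖ ≤ (|R| * U * U * (D * B)) * ((n : ℝ) + 1) := fun n x hx => by
    by_cases hxK : x ∈ tsupport u
    · have h1 : ‖fderiv ℝ (χ n) x (X x)‖ ≤ (D * ((n : ℝ) + 1)) * B :=
        ((fderiv ℝ (χ n) x).le_opNorm _).trans
          (mul_le_mul (hχD n x) (hB x) (norm_nonneg _) (by positivity))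
      have h2 : ‖ρ x * u x * u x‖ ≤ |R| * U * U := by
        rw [norm_mul]
        refine mul_le_mul ((hsb x hx hxK).trans ?_) (hU x) (norm_nonneg _) (by positivity)
        gcongr
        exact le_abs_self R
      calc ‖Z n x‖ = ‖ρ x * u x * u x‖ * ‖fderiv ℝ (χ n) x (X x)‖ := norm_mul _ _
        _ ≤ (|R| * U * U) * ((D * ((n : ℝ) + 1)) * B) :=
            mul_le_mul h2 h1 (norm_nonneg _) (by positivity)
        _ = _ := by ring
    · simp only [Z, hu0 x hxK, mul_zero, zero_mul, norm_zero]
      positivity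
  have iZ : ∀ n, Integrable (Z n) := fun n =>
    integrable_of_bound hN huc.isCompact ((hsm.mul hum).mul
      (aesm_clm_apply ((hχs n).continuous_fderiv one_ne_zero) hX))
      (fun x hx _ => hZb n x hx) (fun x hx => by simp [Z, hu0 x hx])
  have hZ : ∀ n, -∫ x, Z n x ≤ (|R| * U * U * (D * B)) * ((n : ℝ) + 1) *
      (volume : Measure (Euc N)).real (Metric.closedBall 0 (2 / ((n : ℝ) + 1))) := fun n => by
    have h1 : ∫ x in Metric.closedBall (0 : Euc N) (2 / ((n : ℝ) + 1)), Z n x = ∫ x, Z n x :=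
      setIntegral_eq_integral_of_forall_compl_eq_zero fun x hx => by
        simp only [Z, (hχ1 n x hx).2, zero_apply, mul_zero]
    have h2 := norm_setIntegral_le_of_norm_le_const_ae' (μ := volume) (f := Z n)
      (s := Metric.closedBall (0 : Euc N) (2 / ((n : ℝ) + 1))) measure_closedBall_lt_top
      (hne.mono fun x hx _ => hZb n x hx)
    rw [h1] at h2
    exact (neg_le_abs _).trans h2
  have hw : LocallyIntegrable (fun x => C / ρ x) volume := by
    have := hint.smul C
    refine this.congr (ae_of_all _ fun x => ?_)
    simp [div_eq_mul_inv]
  have main : ∀ n, (C + 1) * ∫ x, χ n x * u x ^ 2 ≤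
      -(2 * ∫ x, χ n x * ((ρ x * u x) * fderiv ℝ u x (X x))) +
      (|R| * U * U * (D * B)) * ((n : ℝ) + 1) *
      (volume : Measure (Euc N)).real (Metric.closedBall 0 (2 / ((n : ℝ) + 1))) := fun n => by
    let ψ : Euc N → ℝ := fun x => χ n x * (ρ x * u x ^ 2)
    have hψs : ContDiff ℝ 1 ψ := by
      rw [contDiff_iff_contDiffAt]
      intro x
      by_cases hx : x = 0
      · subst hx
        refine (contDiffAt_const (c := (0 : ℝ))).congr_of_eventuallyEq ?_
        filter_upwards [hχ0 n] with y hy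
        simp only [ψ, hy, zero_mul]
      · exact (hχs n).contDiffAt.mul ((hρ.contDiffAt (isOpen_compl_singleton.mem_nhds hx)).mul
          (hu.contDiffAt.pow 2))
    have hψc : HasCompactSupport ψ := huc.mono fun x hx => by
      intro h
      exact hx (by simp [ψ, h])
    have hψ0 : ∀ x, 0 ≤ ψ x := fun x => by
      by_cases hx : x = 0
      · subst hx
        simp only [ψ, (hχ0 n).eq_of_nhds, zero_mul, le_refl]
      · exact mul_nonneg (hχb n x).1 (mul_nonneg (hρpos x hx).le (sq_nonneg _))
    have h1 := super_C1 hw hX hB hsuper hψs hψc hψ0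
    have h2 : ∫ x, C / ρ x * ψ x = C * ∫ x, χ n x * u x ^ 2 := by
      rw [← integral_const_mul]
      refine integral_congr_ae (hne.mono fun x hx => ?_)
      have := (hρpos x hx).ne'
      simp only [ψ]
      field_simp
    have h3 : ∫ x, fderiv ℝ ψ x (X x) = (∫ x, χ n x * u x ^ 2) +
        2 * (∫ x, χ n x * ((ρ x * u x) * fderiv ℝ u x (X x))) + ∫ x, Z n x := by
      rw [← integral_const_mul, ← integral_add (iχ n iP) ((iχ n iQ).const_mul 2),
        ← integral_add (by exact (iχ n iP).add ((iχ n iQ).const_mul 2)) (iZ n)]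
      refine integral_congr_ae (hne.mono fun x hx => ?_)
      have d1 := ((hχs n).differentiable one_ne_zero x).hasFDerivAt
      have d2 := ((hρ.contDiffAt (isOpen_compl_singleton.mem_nhds hx)).differentiableAt
        one_ne_zero).hasFDerivAt
      have d3 := (hu.differentiable one_ne_zero x).hasFDerivAt
      have d := d1.mul (d2.mul (d3.pow 2))
      have e : fderiv ℝ ψ x = _ := d.fderiv
      beta_reduce
      rw [e]
      simp [Z, hXρ x hx]
      ring
    rw [h2, h3] at h1
    linarith [hZ n]
  have T := le_of_tendsto_of_tendsto' ((lχ iP).const_mul (C + 1))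
    ((((lχ iQ).const_mul 2).neg).add (tendsto_capacity hN _)) main
  simpa using T

/-- Anisotropic uncertainty principle inequality. -/
theorem finsler_uncertainty_principle
    (N : ℕ) (hN : 2 ≤ N) (H : Euc N → ℝ) (hH : IsFinslerNorm H)
    (ρ : Euc N → ℝ) (hρ : ContDiffOn ℝ 1 ρ {(0 : Euc N)}ᶜ)
    (hρpos : ∀ x : Euc N, x ≠ 0 → 0 < ρ x)
    (hρloc : ∀ x : Euc N, ∃ U ∈ 𝓝 x, BddAbove (ρ '' U))
    (heik : ∀ x : Euc N, x ≠ 0 → H (gradient ρ x) = 1)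
    (C : ℝ) (hC : 0 < C)
    (hint : LocallyIntegrable (fun x => 1 / ρ x) volume)
    (hsuper : ∀ φ : Euc N → ℝ, IsTestFun (univ : Set (Euc N)) φ → (∀ x, 0 ≤ φ x) →
      ∫ x, (C / ρ x) * φ x ≤ -∫ x, ⟪gradient H (gradient ρ x), gradient φ x⟫)
    (u : Euc N → ℝ) (hu : IsTestFun (univ : Set (Euc N)) u) :
    ((C + 1) / 2) ^ 2 * (∫ x, |u x| ^ 2) ^ 2
      ≤ (∫ x, ρ x ^ 2 * |u x| ^ 2) *
        ∫ x, |⟪gradient H (gradient ρ x), gradient u x⟫| ^ 2 := by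
  obtain ⟨B, -, hB⟩ := finsler_gradient_bound hH
  have hinner : ∀ (g : Euc N → ℝ) (v x : Euc N), ⟪v, gradient g x⟫ = fderiv ℝ g x v :=
    fun g v x => by
      rw [real_inner_comm, gradient, InnerProductSpace.toDual_symm_apply]
  have hH0 : H 0 = 0 := by simpa using hH.homog 0 0
  have hgne : ∀ x : Euc N, x ≠ 0 → gradient ρ x ≠ 0 := fun x hx h => by
    have := heik x hx
    rw [h, hH0] at this
    exact zero_ne_one this
  have hXc : ContinuousOn (fun x => gradient H (gradient ρ x)) {(0 : Euc N)}ᶜ :=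
    (continuousOn_gradient one_le_two hH.smooth).comp (continuousOn_gradient le_rfl hρ) hgne
  simp only [hinner] at hsuper ⊢
  obtain ⟨iS, iT, iQ, hkey⟩ := integral_sq_le hN hρ hρpos hρloc (aesm_of_continuousOn hN hXc)
    (fun x => hB (gradient ρ x))
    (fun x hx => by rw [← hinner, finsler_euler hH (hgne x hx), heik x hx])
    hint hsuper (hu.1.of_le (by exact_mod_cast le_top)) hu.2.1
  -- the Cauchy–Schwarz inequality, as nonnegativity of the quadratic `t ↦ ∫ (t X · ∇u + ρ u)²`
  have hCS : ∀ t : ℝ, 0 ≤ (∫ x, (fderiv ℝ u x (gradient H (gradient ρ x))) ^ 2) * (t * t) +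
      (2 * ∫ x, (ρ x * u x) * fderiv ℝ u x (gradient H (gradient ρ x))) * t +
      ∫ x, (ρ x * u x) ^ 2 := fun t => by
    rw [← integral_mul_const, ← integral_const_mul, ← integral_mul_const,
      ← integral_add (iT.mul_const _) ((iQ.const_mul 2).mul_const t),
      ← integral_add (by exact (iT.mul_const _).add ((iQ.const_mul 2).mul_const t)) iS]
    refine integral_nonneg fun x => ?_
    change 0 ≤ _
    nlinarith [sq_nonneg (fderiv ℝ u x (gradient H (gradient ρ x)) * t + ρ x * u x)]
  have hdisc := discrim_le_zero hCS
  rw [discrim] at hdisc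
  simp only [sq_abs, ← mul_pow]
  have hP : 0 ≤ ∫ x, u x ^ 2 := integral_nonneg fun x => sq_nonneg _
  have hsq := pow_le_pow_left₀ (by positivity) hkey 2
  nlinarith
end
end

section
/- Let 1 < p < N be real numbers with N ≥ 2 an integer, let R ∈ (0, +∞], and let U ∈ C¹((0, R)) satisfy lim_{r → R} U(r) = 0. Then for every r ∈ (0, R), |U(r)| ≤ ((p−1)/(N−p))^{(p−1)/p} · ( ∫_r^R |U'(s)|^p s^{N−1} ds )^{1/p} · r^{−(N−p)/p}. -/
/-!
The estimate is Hölder's inequality applied to the fundamental theorem of calculus. For `r < b < R`,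
`|U r - U b| ≤ ∫_r^b |U'|`, and writing `|U'| = (|U'| s^{(N-1)/p}) · s^{-(N-1)/p}` and applying
Hölder with exponents `p` and `p/(p-1)` bounds this by
`(∫_r^R |U'|^p s^{N-1})^{1/p} · (∫_r^∞ s^{-(N-1)/(p-1)})^{(p-1)/p}`
(`lintegral_le_weighted`). Since `p < N`, the last integral converges and equals
`(p-1)/(N-p) · r^{-(N-p)/(p-1)}` (`lintegral_weight`). The bound does not depend on `b`,
so `b → R` gives the claim.
-/

open MeasureTheory Set Filter
open scoped RealInnerProductSpace Topology ENNReal NNReal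

noncomputable section

lemma lintegral_weight {p n r : ℝ} (hp : 1 < p) (hpn : p < n) (hr : 0 < r) :
    (∫⁻ s in Ioi r, ENNReal.ofReal (s ^ (-(n - 1) / p)) ^ (p / (p - 1))) ^ (1 / (p / (p - 1))) =
      ENNReal.ofReal (((p - 1) / (n - p)) ^ ((p - 1) / p)) *
        ENNReal.ofReal (r ^ (-(n - p) / p)) := by
  have hp1 : 0 < p - 1 := by linarith
  have hnp : 0 < n - p := by linarith
  have ha : -(n - 1) / (p - 1) < -1 := by
    rw [div_lt_iff₀ hp1]; linarith
  have h1 : ∫⁻ s in Ioi r, ENNReal.ofReal (s ^ (-(n - 1) / p)) ^ (p / (p - 1)) =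
      ∫⁻ s in Ioi r, ENNReal.ofReal (s ^ (-(n - 1) / (p - 1))) := by
    refine setLIntegral_congr_fun measurableSet_Ioi fun s hs => ?_
    have hs0 : 0 < s := hr.trans hs
    rw [ENNReal.ofReal_rpow_of_nonneg (by positivity) (by positivity), ← Real.rpow_mul hs0.le]
    congr 2
    field_simp
  have h2 : 0 ≤ᵐ[volume.restrict (Ioi r)] fun s : ℝ => s ^ (-(n - 1) / (p - 1)) := by
    filter_upwards [ae_restrict_mem measurableSet_Ioi] with s hs
    exact Real.rpow_nonneg (hr.trans hs).le _
  rw [h1, ← ofReal_integral_eq_lintegral_ofReal (integrableOn_Ioi_rpow_of_lt ha hr) h2,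
    integral_Ioi_rpow_of_lt ha hr]
  have h3 : -(n - 1) / (p - 1) + 1 = -((n - p) / (p - 1)) := by
    field_simp; ring
  have h4 : -r ^ (-((n - p) / (p - 1))) / -((n - p) / (p - 1)) =
      (p - 1) / (n - p) * r ^ (-((n - p) / (p - 1))) := by
    field_simp
  rw [h3, h4, one_div_div, ENNReal.ofReal_rpow_of_nonneg (by positivity) (by positivity),
    Real.mul_rpow (by positivity) (by positivity), ← Real.rpow_mul hr.le,
    ENNReal.ofReal_mul (by positivity)]
  congr 3
  field_simp

/-- Hölder's inequality for `f = (f s^{(n-1)/p}) · s^{-(n-1)/p}` on a subset of `(r, ∞)`. -/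
lemma lintegral_le_weighted {p n r : ℝ} (hp : 1 < p) (hpn : p < n) (hr : 0 < r)
    {f : ℝ → ℝ} (hf : Measurable f) {A : Set ℝ} (hA : MeasurableSet A) (hAr : A ⊆ Ioi r) :
    ∫⁻ s in A, ENNReal.ofReal |f s| ≤
      ENNReal.ofReal (((p - 1) / (n - p)) ^ ((p - 1) / p)) *
        (∫⁻ s in A, ENNReal.ofReal (|f s| ^ p * s ^ (n - 1))) ^ (1 / p) *
        ENNReal.ofReal (r ^ (-(n - p) / p)) := by
  have hp0 : 0 < p := by linarith
  have hp1 : 0 < p - 1 := by linarith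
  have h1 : ∫⁻ s in A, ENNReal.ofReal |f s| =
      ∫⁻ s in A, ((fun s => ENNReal.ofReal (|f s| * s ^ ((n - 1) / p))) *
        fun s => ENNReal.ofReal (s ^ (-(n - 1) / p))) s := by
    refine setLIntegral_congr_fun hA fun s hs => ?_
    have hs0 : 0 < s := hr.trans (hAr hs)
    simp only [Pi.mul_apply]
    rw [← ENNReal.ofReal_mul (by positivity), mul_assoc, ← Real.rpow_add hs0, neg_div,
      add_neg_cancel, Real.rpow_zero, mul_one]
  have h2 : ∫⁻ s in A, ENNReal.ofReal (|f s| * s ^ ((n - 1) / p)) ^ p =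
      ∫⁻ s in A, ENNReal.ofReal (|f s| ^ p * s ^ (n - 1)) := by
    refine setLIntegral_congr_fun hA fun s hs => ?_
    have hs0 : 0 < s := hr.trans (hAr hs)
    rw [ENNReal.ofReal_rpow_of_nonneg (by positivity) hp0.le,
      Real.mul_rpow (by positivity) (by positivity), ← Real.rpow_mul hs0.le,
      div_mul_cancel₀ _ hp0.ne']
  have hm : ∀ a : ℝ, Measurable fun s : ℝ => s ^ a := fun a => by fun_prop
  have hol := ENNReal.lintegral_mul_le_Lp_mul_Lq (volume.restrict A)
    (Real.HolderConjugate.conjExponent hp)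
    (f := fun s => ENNReal.ofReal (|f s| * s ^ ((n - 1) / p)))
    (g := fun s => ENNReal.ofReal (s ^ (-(n - 1) / p)))
    (by fun_prop) (by fun_prop)
  rw [h1]
  refine hol.trans ?_
  rw [h2, mul_right_comm, ← lintegral_weight hp hpn hr, mul_comm]
  unfold Real.conjExponent
  gcongr

/-- The fundamental theorem of calculus in `ℝ≥0∞`-valued form. -/
lemma ofReal_abs_sub_le {U : ℝ → ℝ} {r b : ℝ} (hrb : r ≤ b)
    (hd : ∀ s ∈ Icc r b, DifferentiableAt ℝ U s) (hc : ContinuousOn (deriv U) (Icc r b)) :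
    ENNReal.ofReal |U r - U b| ≤ ∫⁻ s in Ioc r b, ENNReal.ofReal |deriv U s| := by
  have hftc : ∫ s in r..b, deriv U s = U b - U r :=
    intervalIntegral.integral_deriv_eq_sub (by rwa [uIcc_of_le hrb])
      (ContinuousOn.intervalIntegrable (by rwa [uIcc_of_le hrb]))
  rw [abs_sub_comm, ← hftc, intervalIntegral.integral_of_le hrb]
  have h := enorm_integral_le_lintegral_enorm (μ := volume.restrict (Ioc r b)) (deriv U)
  simpa only [← ofReal_norm, Real.norm_eq_abs] using h

/-- Pointwise radial estimate, subcritical case 1 < p < N, with R ∈ (0, +∞]. -/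
theorem radial_pointwise_estimate_subcritical
    (N : ℕ) (hN : 2 ≤ N) (p : ℝ) (hp : 1 < p) (hpN : p < (N : ℝ))
    (R : EReal) (hR : 0 < R)
    (U : ℝ → ℝ) (hU : ContDiffOn ℝ 1 U {s : ℝ | 0 < s ∧ (s : EReal) < R})
    (hlim : Tendsto U (comap (fun s : ℝ => (s : EReal)) (𝓝[<] R)) (𝓝 0))
    (r : ℝ) (hr : 0 < r) (hrR : (r : EReal) < R) :
    ENNReal.ofReal |U r| ≤
      ENNReal.ofReal (((p - 1) / ((N : ℝ) - p)) ^ ((p - 1) / p)) *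
        (∫⁻ s in {s : ℝ | r < s ∧ (s : EReal) < R},
            ENNReal.ofReal (|deriv U s| ^ p * s ^ ((N : ℝ) - 1))) ^ (1 / p) *
        ENNReal.ofReal (r ^ (-((N : ℝ) - p) / p)) := by
  set I : Set ℝ := {s : ℝ | 0 < s ∧ (s : EReal) < R} with hI
  have hIo : IsOpen I :=
    (isOpen_lt continuous_const continuous_id).inter
      (isOpen_lt continuous_coe_real_ereal continuous_const)
  have hAm : MeasurableSet {s : ℝ | r < s ∧ (s : EReal) < R} :=
    ((isOpen_lt continuous_const continuous_id).inter
      (isOpen_lt continuous_coe_real_ereal continuous_const)).measurableSet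
  have hder : ContinuousOn (deriv U) I := hU.continuousOn_deriv_of_isOpen hIo le_rfl
  -- The filter is proper because every left neighbourhood of `R` contains a real number.
  have hne : (comap (fun s : ℝ => (s : EReal)) (𝓝[<] R)).NeBot := by
    refine comap_neBot_iff.2 fun t ht => ?_
    obtain ⟨l, hl, hlt⟩ := (mem_nhdsLT_iff_exists_Ioo_subset' hrR).1 ht
    obtain ⟨x, hx1, hx2⟩ := EReal.lt_iff_exists_real_btwn.1 hl
    exact ⟨x, hlt ⟨hx1, hx2⟩⟩
  have hlim' : Tendsto (fun b => ENNReal.ofReal |U r - U b|)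
      (comap (fun s : ℝ => (s : EReal)) (𝓝[<] R)) (𝓝 (ENNReal.ofReal |U r|)) := by
    have h := ENNReal.tendsto_ofReal (hlim.const_sub (U r)).abs
    rwa [sub_zero] at h
  have hev : ∀ᶠ b : ℝ in comap (fun s : ℝ => (s : EReal)) (𝓝[<] R), r < b ∧ (b : EReal) < R := by
    refine ⟨Ioo (r : EReal) R, Ioo_mem_nhdsLT hrR, fun b hb => ?_⟩
    exact ⟨EReal.coe_lt_coe_iff.1 hb.1, hb.2⟩
  refine le_of_tendsto hlim' (hev.mono fun b hb => ?_)
  have hsub : Icc r b ⊆ I := fun s hs =>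
    ⟨hr.trans_le hs.1, (EReal.coe_le_coe_iff.2 hs.2).trans_lt hb.2⟩
  refine (ofReal_abs_sub_le hb.1.le
    (fun s hs => (hU.differentiableOn one_ne_zero).differentiableAt (hIo.mem_nhds (hsub hs)))
    (hder.mono hsub)).trans ?_
  refine le_trans (lintegral_mono_set fun s hs => ?_)
    (lintegral_le_weighted hp hpN hr (measurable_deriv U) hAm fun s hs => hs.1)
  exact ⟨hs.1, (hsub ⟨hs.1.le, hs.2⟩).2⟩
end
end

section
/- Let 1 ≤ p < N and let Ω ⊆ ℝ^N be a domain with 0 ∈ Ω. Then the best Hardy constant H_p(Ω) := inf over nonzero u ∈ C_c^∞(Ω) of [ ∫_Ω |(x/H⁰(x)) · ∇u(x)|^p dx / ∫_Ω |u(x)|^p / H⁰(x)^p dx ] equals ((N−p)/p)^p. Moreover, if 1 < p < N, the infimum is not attained: for every nonzero u ∈ C_c^∞(Ω) the above quotient is strictly greater than ((N−p)/p)^p. -/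
/-! The quotient compares the Euler derivative `Du = x · ∇u` with `u` in `L^p` for the measure
`(H⁰)^(-p) dx`, which scales with degree `N - p` under dilations. Of `H⁰` only continuity,
positive homogeneity and comparability with the Euclidean norm matter (`IsGauge`).

*Lower bound.* With `c = (N-p)/p`, the fundamental theorem of calculus along rays gives
`|u(x)|^p ≤ ∫₁^∞ p |u|^(p-1) |Du| (t x) dt/t` (`ray_bound`); integrating, by Tonelli and
dilation, `(N-p) ∫ |u|^p ≤ ∫ p |u|^(p-1) |Du|` in the weighted measure (`hardy_mul_bound`).
Young's inequality `p a^(p-1) b ≤ (p-1) a^p + b^p` with `a = c|u|`, `b = |Du|` then yields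
`c^p ∫ |u|^p ≤ ∫ |Du|^p`. For `p > 1`, equality forces `|Du| = c|u|` everywhere, and Grönwall's
inequality along rays, started outside the support, gives `u = 0` (`hardy_main`).

*Sharpness.* The functions `|x|^(-c) χ(ε log |x|)`, radial for the *Euclidean* norm and hence
smooth whatever the regularity of `H⁰`, are supported near the origin for small `ε`. In polar
coordinates numerator and denominator contain the same angular factor, so the quotient is
`∫ |ε χ' - c χ|^p / ∫ |χ|^p`, which tends to `c^p` as `ε → 0` (`exists_quotient_lt`). -/

open MeasureTheory Set Filter
open scoped RealInnerProductSpace Topology ENNReal NNReal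

noncomputable section

/-! ### The polar norm -/

/-- The properties of the polar function that the argument uses: continuity, positive
homogeneity of degree one, and comparability with the Euclidean norm. -/
structure IsGauge {N : ℕ} (g : Euc N → ℝ) : Prop where
  cont : Continuous g
  smul : ∀ t : ℝ, 0 < t → ∀ x, g (t • x) = t * g x
  bounds : ∃ a b : ℝ, 0 < a ∧ 0 < b ∧ ∀ x, a * ‖x‖ ≤ g x ∧ g x ≤ b * ‖x‖

lemma IsGauge.nonneg {N : ℕ} {g : Euc N → ℝ} (hg : IsGauge g) (x : Euc N) : 0 ≤ g x := by
  obtain ⟨a, b, ha, hb, h⟩ := hg.bounds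
  exact le_trans (by positivity) (h x).1

lemma IsGauge.pos {N : ℕ} {g : Euc N → ℝ} (hg : IsGauge g) {x : Euc N} (hx : x ≠ 0) :
    0 < g x := by
  obtain ⟨a, b, ha, hb, h⟩ := hg.bounds
  exact lt_of_lt_of_le (mul_pos ha (norm_pos_iff.2 hx)) (h x).1

lemma polarNorm_isGauge {N : ℕ} (hN : 2 ≤ N) {H : Euc N → ℝ} (hH : IsFinslerNorm H) :
    IsGauge (polarNorm H) := by
  obtain ⟨a, b, ha, hab, hb⟩ := hH.bounds
  have hb0 : 0 < b := ha.trans_le hab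
  have : Nonempty (Fin N) := ⟨⟨0, by omega⟩⟩
  have : Nontrivial (Euc N) := inferInstance
  have hpos : ∀ ξ : Euc N, ξ ≠ 0 → 0 < H ξ := fun ξ hξ =>
    lt_of_lt_of_le (mul_pos ha (norm_pos_iff.2 hξ)) (hb ξ).1
  have hbd : ∀ x : Euc N, ∀ ξ : Euc N, ξ ≠ 0 → ⟪ξ, x⟫ / H ξ ≤ a⁻¹ * ‖x‖ := by
    intro x ξ hξ
    rw [div_le_iff₀ (hpos ξ hξ)]
    calc ⟪ξ, x⟫ ≤ ‖ξ‖ * ‖x‖ := real_inner_le_norm _ _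
      _ = a⁻¹ * ‖x‖ * (a * ‖ξ‖) := by field_simp
      _ ≤ _ := by gcongr; exact (hb ξ).1
  have hBdd : ∀ x : Euc N, BddAbove {r : ℝ | ∃ ξ : Euc N, ξ ≠ 0 ∧ r = ⟪ξ, x⟫ / H ξ} := by
    rintro x
    refine ⟨a⁻¹ * ‖x‖, ?_⟩
    rintro r ⟨ξ, hξ, rfl⟩
    exact hbd x ξ hξ
  have hle : ∀ x ξ : Euc N, ξ ≠ 0 → ⟪ξ, x⟫ / H ξ ≤ polarNorm H x := fun x ξ hξ =>
    le_csSup (hBdd x) ⟨ξ, hξ, rfl⟩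
  have hsup : ∀ (x : Euc N) (C : ℝ), (∀ ξ : Euc N, ξ ≠ 0 → ⟪ξ, x⟫ / H ξ ≤ C) →
      polarNorm H x ≤ C := by
    intro x C hC
    obtain ⟨ξ, hξ⟩ := exists_ne (0 : Euc N)
    refine csSup_le ⟨_, ξ, hξ, rfl⟩ ?_
    rintro r ⟨ξ, hξ, rfl⟩
    exact hC ξ hξ
  have hupper : ∀ x, polarNorm H x ≤ a⁻¹ * ‖x‖ := fun x => hsup x _ (hbd x)
  have hadd : ∀ x y, polarNorm H (x + y) ≤ polarNorm H x + polarNorm H y := by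
    intro x y
    refine hsup _ _ fun ξ hξ => ?_
    rw [inner_add_right, add_div]
    exact add_le_add (hle _ _ hξ) (hle _ _ hξ)
  have hsm : ∀ t : ℝ, 0 < t → ∀ x, polarNorm H (t • x) ≤ t * polarNorm H x := by
    intro t ht x
    refine hsup _ _ fun ξ hξ => ?_
    rw [inner_smul_right, mul_div_assoc]
    exact mul_le_mul_of_nonneg_left (hle _ _ hξ) ht.le
  refine ⟨?_, ?_, b⁻¹, a⁻¹, by positivity, by positivity, fun x => ⟨?_, hupper x⟩⟩
  · refine (LipschitzWith.of_le_add_mul (Real.toNNReal a⁻¹) fun x y => ?_).continuous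
    rw [Real.coe_toNNReal _ (by positivity), dist_eq_norm]
    have h1 := hadd y (x - y)
    rw [add_sub_cancel] at h1
    linarith [hupper (x - y)]
  · intro t ht x
    refine le_antisymm (hsm t ht x) ?_
    have h1 := hsm t⁻¹ (by positivity) (t • x)
    rw [smul_smul, inv_mul_cancel₀ ht.ne', one_smul] at h1
    rwa [inv_mul_eq_div, le_div_iff₀' ht] at h1
  · rcases eq_or_ne x 0 with rfl | hx
    · obtain ⟨ξ, hξ⟩ := exists_ne (0 : Euc N)
      simpa using hle 0 ξ hξ
    · refine le_trans ?_ (hle x x hx)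
      rw [le_div_iff₀ (hpos x hx), real_inner_self_eq_norm_sq]
      calc b⁻¹ * ‖x‖ * H x ≤ b⁻¹ * ‖x‖ * (b * ‖x‖) := by
            gcongr; exact (hb x).2
        _ = ‖x‖ ^ 2 := by field_simp

/-! ### The Euler operator along rays -/

/-- The Euler operator `x ↦ x · ∇u(x)`. -/
def eulerD {N : ℕ} (u : Euc N → ℝ) (x : Euc N) : ℝ := fderiv ℝ u x x

lemma eulerD_continuous {N : ℕ} {u : Euc N → ℝ} (hu : ContDiff ℝ (⊤ : ℕ∞) u) :
    Continuous (eulerD u) := by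
  have h : Continuous (fderiv ℝ u) := hu.continuous_fderiv (by simp)
  exact h.clm_apply continuous_id

lemma eulerD_eq_zero {N : ℕ} {u : Euc N → ℝ} {x : Euc N} (hx : x ∉ tsupport u) :
    eulerD u x = 0 := by
  have : fderiv ℝ u x = 0 := by
    by_contra h
    exact hx (support_fderiv_subset ℝ h)
  simp [eulerD, this]

lemma hasDerivAt_ray {N : ℕ} {u : Euc N → ℝ} (hu : ContDiff ℝ (⊤ : ℕ∞) u) (x : Euc N) {t : ℝ}
    (ht : t ≠ 0) : HasDerivAt (fun s : ℝ => u (s • x)) (eulerD u (t • x) / t) t := by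
  have h1 : HasFDerivAt u (fderiv ℝ u (t • x)) (t • x) :=
    (hu.differentiable (by simp) _).hasFDerivAt
  have h2 : HasDerivAt (fun s : ℝ => s • x) x t := by
    simpa using (hasDerivAt_id t).smul_const x
  have h3 := h1.comp_hasDerivAt t h2
  convert! h3 using 1
  simp [eulerD, ht]

lemma exists_ray_zero {N : ℕ} {u : Euc N → ℝ} (hu : HasCompactSupport u) {x : Euc N}
    (hx : x ≠ 0) : ∃ T : ℝ, 1 < T ∧ u (T • x) = 0 := by
  obtain ⟨R, hR⟩ := hu.isBounded.exists_norm_le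
  have hx' := norm_pos_iff.2 hx
  refine ⟨|R| / ‖x‖ + 2, ?_, ?_⟩
  · have : 0 ≤ |R| / ‖x‖ := by positivity
    linarith
  · by_contra h
    have h1 := hR _ (subset_tsupport u h)
    rw [norm_smul, Real.norm_of_nonneg (by positivity), add_mul, div_mul_cancel₀ _ hx'.ne'] at h1
    linarith [le_abs_self R]

/-! ### Integrability of the Hardy weight -/

lemma integrable_div_gauge {N : ℕ} {g : Euc N → ℝ} (hg : IsGauge g) {p : ℝ} (hN : 2 ≤ N)
    (hp1 : 1 ≤ p) (hpN : p < N) {k : Euc N → ℝ} (hk : Continuous k) (hkc : HasCompactSupport k) :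
    Integrable (fun x => k x / g x ^ p) := by
  obtain ⟨a, b, ha, hb, h⟩ := hg.bounds
  obtain ⟨C, hC⟩ := hkc.exists_bound_of_continuous hk
  obtain ⟨R, hR⟩ := hkc.isBounded.exists_norm_le
  have : Nonempty (Fin N) := ⟨⟨0, by omega⟩⟩
  have hw : IntegrableOn (fun x : Euc N => ‖x‖ ^ (-p)) (Metric.ball 0 (|R| + 1)) := by
    rw [integrableOn_fun_norm_addHaar (μ := volume) (f := fun r : ℝ => r ^ (-p))]
    have h1 : IntegrableOn (fun y : ℝ => y ^ ((N : ℝ) - 1 - p)) (Ioo 0 (|R| + 1)) := by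
      have := (intervalIntegral.intervalIntegrable_rpow' (a := 0) (b := |R| + 1)
        (r := (N : ℝ) - 1 - p) (by linarith))
      rw [intervalIntegrable_iff_integrableOn_Ioo_of_le (by positivity)] at this
      exact this
    refine h1.congr_fun (fun y hy => ?_) measurableSet_Ioo
    have hy0 : 0 < y := hy.1
    simp only [finrank_euclideanSpace, Fintype.card_fin, smul_eq_mul]
    rw [← Real.rpow_natCast, ← Real.rpow_add hy0, Nat.cast_sub (by omega)]
    congr 1; push_cast; ring
  have hw2 := (hw.integrable_indicator Metric.isOpen_ball.measurableSet).const_mul (C * a ^ (-p))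
  refine hw2.mono' ?_ (Eventually.of_forall fun x => ?_)
  · exact (hk.measurable.div (hg.cont.measurable.pow_const p)).aestronglyMeasurable
  · by_cases hkx : k x = 0
    · have hC0 : 0 ≤ C := (norm_nonneg _).trans (hC x)
      simp only [hkx, zero_div, norm_zero]
      refine mul_nonneg (by positivity) (indicator_nonneg (fun y _ => by positivity) _)
    · have hxR := hR x (subset_tsupport k hkx)
      have hxb : x ∈ Metric.ball (0 : Euc N) (|R| + 1) := by
        rw [mem_ball_zero_iff]; linarith [le_abs_self R]
      rw [indicator_of_mem hxb]
      rcases eq_or_ne x 0 with rfl | hx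
      · have hg0 : g 0 = 0 := le_antisymm (by simpa using (h 0).2) (hg.nonneg 0)
        have hC0 : 0 ≤ C := (norm_nonneg _).trans (hC 0)
        rw [hg0, Real.zero_rpow (by linarith), div_zero, norm_zero]
        positivity
      · have hx' := norm_pos_iff.2 hx
        rw [norm_div, Real.norm_of_nonneg (Real.rpow_nonneg (hg.nonneg x) p), div_eq_mul_inv,
          ← Real.rpow_neg (hg.nonneg x), mul_assoc, ← Real.mul_rpow ha.le hx'.le]
        refine mul_le_mul (hC x) ?_ (by have := hg.nonneg x; positivity)
          ((norm_nonneg _).trans (hC x))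
        exact Real.rpow_le_rpow_of_nonpos (by positivity) (h x).1 (by linarith)

/-! ### The Hardy inequality -/

/-- The density `p |u|^(p-1) |x · ∇u|` dominating the radial derivative of `|u|^p`. -/
def hardyK {N : ℕ} (p : ℝ) (u : Euc N → ℝ) (x : Euc N) : ℝ :=
  p * |u x| ^ (p - 1) * |eulerD u x|

lemma hardyK_continuous {N : ℕ} {p : ℝ} (hp1 : 1 ≤ p) {u : Euc N → ℝ}
    (hu : ContDiff ℝ (⊤ : ℕ∞) u) : Continuous (hardyK p u) := by
  have h1 := eulerD_continuous hu
  have h2 := hu.continuous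
  unfold hardyK
  exact (continuous_const.mul (h2.abs.rpow_const fun _ => Or.inr (by linarith))).mul h1.abs

lemma hardyK_nonneg {N : ℕ} {p : ℝ} (hp1 : 1 ≤ p) (u : Euc N → ℝ) (x : Euc N) :
    0 ≤ hardyK p u x := by
  unfold hardyK; positivity

/-- The fundamental theorem of calculus along the ray through `x`, from `x` out to a point where
`u` vanishes. For `p = 1` it is applied to `u` itself, as `|u|` need not be differentiable. -/
lemma ray_bound {N : ℕ} {p : ℝ} (hp1 : 1 ≤ p) {u : Euc N → ℝ}
    (hu : ContDiff ℝ (⊤ : ℕ∞) u) (hc : HasCompactSupport u) {x : Euc N} (hx : x ≠ 0) :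
    ENNReal.ofReal (|u x| ^ p) ≤
      ∫⁻ t in Ioi (1 : ℝ), ENNReal.ofReal (hardyK p u (t • x) / t) := by
  obtain ⟨T, hT, hT0⟩ := exists_ray_zero hc hx
  have key : ∃ F : ℝ → ℝ, ContDiff ℝ 1 F ∧ |F 1| = |u x| ^ p ∧ F T = 0 ∧
      ∀ t, 0 < t → ‖deriv F t‖ ≤ hardyK p u (t • x) / t := by
    have hray : ContDiff ℝ 1 (fun s : ℝ => u (s • x)) :=
      (hu.of_le (by simp)).comp (contDiff_id.smul contDiff_const)
    rcases hp1.eq_or_lt with rfl | hp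
    · refine ⟨fun s => u (s • x), hray, by simp, hT0, fun t ht => ?_⟩
      rw [(hasDerivAt_ray hu x ht.ne').deriv]
      simp [hardyK, abs_of_pos ht]
    · refine ⟨fun s => |u (s • x)| ^ p, by simpa using hray.norm_rpow hp, ?_, ?_, fun t ht => ?_⟩
      · simp only [one_smul]
        exact abs_of_nonneg (by positivity)
      · simp only [hT0, abs_zero]
        exact Real.zero_rpow (by linarith)
      · have h1 := (hasDerivAt_abs_rpow (u (t • x)) hp).comp t (hasDerivAt_ray hu x ht.ne')
        have h2 : deriv (fun s : ℝ => |u (s • x)| ^ p) t = _ := h1.deriv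
        rw [h2, norm_mul, norm_mul, norm_mul, norm_div]
        simp only [Real.norm_eq_abs, abs_of_pos ht, abs_of_pos (zero_lt_one.trans hp)]
        rw [abs_of_nonneg (Real.rpow_nonneg (abs_nonneg _) _)]
        unfold hardyK
        rcases eq_or_ne (u (t • x)) 0 with h0 | h0
        · have : 0 ≤ p * |u (t • x)| ^ (p - 1) * |eulerD u (t • x)| / t := by positivity
          rw [h0] at this ⊢
          simpa using this
        · have : |u (t • x)| ^ (p - 1) = |u (t • x)| ^ (p - 2) * |u (t • x)| := by
            rw [← Real.rpow_add_one (abs_ne_zero.2 h0)]; congr 1; ring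
          rw [this]
          exact le_of_eq (by ring)
  obtain ⟨F, hF, hF1, hFT, hFb⟩ := key
  have hGc : ContinuousOn (fun t : ℝ => hardyK p u (t • x) / t) (Icc 1 T) := by
    refine ContinuousOn.div ?_ continuousOn_id fun t ht => by
      have := ht.1
      exact ne_of_gt (lt_of_lt_of_le one_pos this)
    exact ((hardyK_continuous hp1 hu).comp (continuous_id.smul continuous_const)).continuousOn
  have hGi : IntervalIntegrable (fun t : ℝ => hardyK p u (t • x) / t) volume 1 T := by
    apply ContinuousOn.intervalIntegrable
    rwa [uIcc_of_le hT.le]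
  have h1 : ∫ t in (1 : ℝ)..T, deriv F t = F T - F 1 :=
    intervalIntegral.integral_deriv_eq_sub (fun t _ => hF.differentiable (by simp) t)
      ((hF.continuous_deriv (by simp)).intervalIntegrable _ _)
  have h2 := intervalIntegral.norm_integral_le_of_norm_le (f := deriv F) hT.le
    (Eventually.of_forall fun t (ht : t ∈ Ioc 1 T) => hFb t (by linarith [ht.1])) hGi
  rw [h1, hFT, zero_sub, norm_neg, Real.norm_eq_abs, hF1,
    intervalIntegral.integral_of_le hT.le] at h2
  refine (ENNReal.ofReal_le_ofReal h2).trans ?_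
  rw [ofReal_integral_eq_lintegral_ofReal
    ((intervalIntegrable_iff_integrableOn_Ioc_of_le hT.le).1 hGi)]
  · exact lintegral_mono_set Ioc_subset_Ioi_self
  · refine (ae_restrict_iff' measurableSet_Ioc).2 (Eventually.of_forall fun t ht => ?_)
    exact div_nonneg (hardyK_nonneg hp1 _ _) (by linarith [ht.1])

lemma lintegral_comp_dilation {N : ℕ} {f : Euc N → ℝ≥0∞} (hf : Measurable f) {t : ℝ}
    (ht : 0 < t) :
    ∫⁻ x, f (t • x) = ENNReal.ofReal (t ^ (-(N : ℝ))) * ∫⁻ x, f x := by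
  rw [← lintegral_map hf (measurable_const_smul t), Measure.map_addHaar_smul _ ht.ne',
    lintegral_smul_measure, smul_eq_mul]
  congr 2
  rw [finrank_euclideanSpace, Fintype.card_fin, abs_of_nonneg (by positivity),
    Real.rpow_neg ht.le, Real.rpow_natCast]

/-- Integrating the ray estimate against the Hardy weight, which is homogeneous of degree `-p`,
produces the factor `∫₁^∞ t^(p-1-N) dt = 1 / (N-p)`. -/
lemma hardy_mul_bound {N : ℕ} {g : Euc N → ℝ} (hg : IsGauge g) {p : ℝ} (hN : 2 ≤ N)
    (hp1 : 1 ≤ p) (hpN : p < N) {u : Euc N → ℝ}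
    (hu : ContDiff ℝ (⊤ : ℕ∞) u) (hc : HasCompactSupport u) :
    (N - p) * ∫ x, |u x| ^ p / g x ^ p ≤ ∫ x, hardyK p u x / g x ^ p := by
  have : Nonempty (Fin N) := ⟨⟨0, by omega⟩⟩
  have hcI : HasCompactSupport (fun x => |u x| ^ p) := by
    refine hc.comp_left (g := fun y : ℝ => |y| ^ p) ?_
    simp [Real.zero_rpow (by linarith : p ≠ 0)]
  have hcK : HasCompactSupport (hardyK p u) := by
    refine HasCompactSupport.intro hc.isCompact fun x hx => ?_
    simp [hardyK, eulerD_eq_zero hx]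
  have hI := integrable_div_gauge hg hN hp1 hpN
    (hu.continuous.abs.rpow_const fun _ => Or.inr (by linarith)) hcI
  have hK := integrable_div_gauge hg hN hp1 hpN (hardyK_continuous hp1 hu) hcK
  set W : Euc N → ℝ := fun x => hardyK p u x / g x ^ p with hW
  have hW0 : ∀ x, 0 ≤ W x := fun x =>
    div_nonneg (hardyK_nonneg hp1 _ _) (Real.rpow_nonneg (hg.nonneg x) p)
  have hWm : Measurable W :=
    (hardyK_continuous hp1 hu).measurable.div (hg.cont.measurable.pow_const p)
  have hpt : ∀ᵐ x : Euc N, ENNReal.ofReal (|u x| ^ p / g x ^ p) ≤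
      ∫⁻ t in Ioi (1 : ℝ), ENNReal.ofReal (t ^ (p - 1)) * ENNReal.ofReal (W (t • x)) := by
    filter_upwards [compl_mem_ae_iff.2 (measure_singleton (0 : Euc N))] with x hx
    have hx : x ≠ 0 := hx
    have hgx := hg.pos hx
    rw [div_eq_mul_inv, ENNReal.ofReal_mul (by positivity)]
    refine (mul_le_mul_left (ray_bound hp1 hu hc hx) _).trans ?_
    rw [← lintegral_mul_const' _ _ ENNReal.ofReal_ne_top]
    refine setLIntegral_mono' measurableSet_Ioi fun t (ht : 1 < t) => ?_
    have ht0 : 0 < t := by linarith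
    have hKn := hardyK_nonneg hp1 u (t • x)
    rw [← ENNReal.ofReal_mul (by positivity), ← ENNReal.ofReal_mul (by positivity)]
    refine ENNReal.ofReal_le_ofReal (le_of_eq ?_)
    rw [hW]
    simp only
    rw [hg.smul t ht0, Real.mul_rpow ht0.le hgx.le, Real.rpow_sub_one ht0.ne']
    have := Real.rpow_pos_of_pos ht0 p
    have := Real.rpow_pos_of_pos hgx p
    field_simp
  have hlint : ∫⁻ x : Euc N, ENNReal.ofReal (|u x| ^ p / g x ^ p) ≤
      ENNReal.ofReal (1 / (N - p)) * ∫⁻ x, ENNReal.ofReal (W x) := by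
    refine (lintegral_mono_ae hpt).trans ?_
    rw [lintegral_lintegral_swap]
    · have hin : ∀ t ∈ Ioi (1 : ℝ), ∫⁻ x : Euc N, ENNReal.ofReal (t ^ (p - 1)) *
          ENNReal.ofReal (W (t • x)) =
          ENNReal.ofReal (t ^ (p - 1 - N)) * ∫⁻ x, ENNReal.ofReal (W x) := by
        intro t ht
        have ht0 : 0 < t := lt_trans one_pos ht
        rw [lintegral_const_mul' _ _ ENNReal.ofReal_ne_top,
          lintegral_comp_dilation (f := fun x => ENNReal.ofReal (W x)) hWm.ennreal_ofReal ht0,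
          ← mul_assoc, ← ENNReal.ofReal_mul (by positivity), ← Real.rpow_add ht0]
        congr 3
      rw [setLIntegral_congr_fun measurableSet_Ioi hin, lintegral_mul_const _ (by fun_prop)]
      gcongr
      rw [← ofReal_integral_eq_lintegral_ofReal
        (integrableOn_Ioi_rpow_of_lt (by linarith) one_pos)]
      · rw [integral_Ioi_rpow_of_lt (by linarith) one_pos]
        refine ENNReal.ofReal_le_ofReal (le_of_eq ?_)
        rw [Real.one_rpow, neg_div, ← div_neg]
        congr 1; ring
      · refine (ae_restrict_iff' measurableSet_Ioi).2 (Eventually.of_forall fun t ht => ?_)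
        exact Real.rpow_nonneg (le_trans zero_le_one (le_of_lt ht)) _
    · refine Measurable.aemeasurable ?_
      have h1 : Measurable fun z : Euc N × ℝ => W (z.2 • z.1) :=
        hWm.comp (measurable_snd.smul measurable_fst)
      have h2 : Measurable fun z : Euc N × ℝ => z.2 ^ (p - 1) := measurable_snd.pow_const _
      exact h2.ennreal_ofReal.mul h1.ennreal_ofReal
  rw [← ofReal_integral_eq_lintegral_ofReal hI (Eventually.of_forall fun x =>
      div_nonneg (by positivity) (Real.rpow_nonneg (hg.nonneg x) p)),
    ← ofReal_integral_eq_lintegral_ofReal hK (Eventually.of_forall hW0),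
    ← ENNReal.ofReal_mul (by have : 0 < N - p := by linarith
                             positivity),
    ENNReal.ofReal_le_ofReal_iff (mul_nonneg (by have : 0 < N - p := by linarith
                                                 positivity) (integral_nonneg hW0))] at hlint
  have hd : 0 < (N : ℝ) - p := by linarith
  rw [one_div, inv_mul_eq_div, le_div_iff₀' hd] at hlint
  exact hlint

lemma young_strict {p : ℝ} (hp : 1 < p) {a b : ℝ} (ha : 0 ≤ a) (hb : 0 ≤ b) (hab : b ≠ a) :
    p * a ^ (p - 1) * b < (p - 1) * a ^ p + b ^ p := by
  rcases ha.eq_or_lt with rfl | ha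
  · rw [Real.zero_rpow (by linarith), Real.zero_rpow (by linarith)]
    have : 0 < b := lt_of_le_of_ne hb (Ne.symm hab)
    have := Real.rpow_pos_of_pos this p
    linarith
  · have h := one_add_mul_self_lt_rpow_one_add (s := b / a - 1) (p := p)
      (by have : 0 ≤ b / a := by positivity
          linarith) (by rw [sub_ne_zero, ne_eq, div_eq_one_iff_eq ha.ne']; exact hab) hp
    have hap := Real.rpow_pos_of_pos ha p
    rw [add_sub_cancel, Real.div_rpow hb ha.le, lt_div_iff₀ hap] at h
    rw [Real.rpow_sub_one ha.ne']
    have e : p * (a ^ p / a) * b = p * (b / a) * a ^ p := by field_simp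
    rw [e]
    linarith

lemma young_le {p : ℝ} (hp : 1 ≤ p) {a b : ℝ} (ha : 0 ≤ a) (hb : 0 ≤ b) :
    p * a ^ (p - 1) * b ≤ (p - 1) * a ^ p + b ^ p := by
  rcases hp.eq_or_lt with rfl | hp
  · simp
  rcases eq_or_ne b a with rfl | hab
  · rcases ha.eq_or_lt with rfl | ha
    · rw [Real.zero_rpow (by linarith), Real.zero_rpow (by linarith)]; simp
    · rw [Real.rpow_sub_one ha.ne']
      exact le_of_eq (by field_simp; ring)
  · exact (young_strict hp ha hb hab).le

/-- Grönwall's inequality along rays: a compactly supported `u` cannot satisfy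
`|x · ∇u| = c |u|` unless it vanishes. -/
lemma eq_zero_of_eulerD_eq {N : ℕ} {u : Euc N → ℝ} (hu : ContDiff ℝ (⊤ : ℕ∞) u)
    (hc : HasCompactSupport u) {c : ℝ} (hc0 : 0 < c) (h : ∀ x, |eulerD u x| = c * |u x|) :
    u = 0 := by
  funext x
  rcases eq_or_ne x 0 with rfl | hx
  · have := h 0
    simp only [eulerD, map_zero, abs_zero] at this
    simpa [hc0.ne'] using this.symm
  obtain ⟨T, hT, hT0⟩ := exists_ray_zero hc hx
  -- the ray is run inwards, from the zero at `T • x` to `x`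
  have hd : ∀ s : ℝ, s < T → HasDerivAt (fun s : ℝ => u ((T - s) • x))
      (-(eulerD u ((T - s) • x) / (T - s))) s := by
    intro s hs
    have h1 := hasDerivAt_ray hu x (t := T - s) (by linarith)
    have h2 : HasDerivAt (fun s : ℝ => T - s) (-1) s := by
      simpa using (hasDerivAt_id s).const_sub T
    have h3 := h1.comp s h2
    convert! h3 using 1
    ring
  have := eq_zero_of_abs_deriv_le_mul_abs_self_of_eq_zero_right (a := 0) (b := T - 1) (K := c)
    (f := fun s : ℝ => u ((T - s) • x)) (f' := fun s => -(eulerD u ((T - s) • x) / (T - s)))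
    (fun s hs => (hd s (by linarith [hs.2])).continuousAt.continuousWithinAt)
    (fun s hs => (hd s (by linarith [hs.2])).hasDerivWithinAt) (by simpa using hT0)
    (fun s hs => by
      have : 1 < T - s := by linarith [hs.2]
      rw [norm_neg, norm_div, Real.norm_eq_abs, h, Real.norm_eq_abs, Real.norm_eq_abs,
        abs_of_pos (by linarith : 0 < T - s)]
      exact div_le_self (by positivity) this.le) (T - 1) ⟨by linarith, le_rfl⟩
  simpa using this

/-- The Hardy inequality, its strictness for `p > 1`, and positivity of the denominator. -/
lemma hardy_main {N : ℕ} {g : Euc N → ℝ} (hg : IsGauge g) {p : ℝ} (hN : 2 ≤ N)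
    (hp1 : 1 ≤ p) (hpN : p < N) {u : Euc N → ℝ}
    (hu : ContDiff ℝ (⊤ : ℕ∞) u) (hc : HasCompactSupport u) (hne : u ≠ 0) :
    0 < ∫ x, |u x| ^ p / g x ^ p ∧
    ((N - p) / p) ^ p * ∫ x, |u x| ^ p / g x ^ p ≤ ∫ x, |eulerD u x| ^ p / g x ^ p ∧
    (1 < p →
      ((N - p) / p) ^ p * ∫ x, |u x| ^ p / g x ^ p < ∫ x, |eulerD u x| ^ p / g x ^ p) := by
  have : Nonempty (Fin N) := ⟨⟨0, by omega⟩⟩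
  have hp0 : 0 < p := by linarith
  have hcI : HasCompactSupport (fun x => |u x| ^ p) := by
    refine hc.comp_left (g := fun y : ℝ => |y| ^ p) ?_
    simp [Real.zero_rpow hp0.ne']
  have hcK : HasCompactSupport (hardyK p u) := by
    refine HasCompactSupport.intro hc.isCompact fun x hx => ?_
    simp [hardyK, eulerD_eq_zero hx]
  have hcJ : HasCompactSupport (fun x => |eulerD u x| ^ p) := by
    refine HasCompactSupport.intro hc.isCompact fun x hx => ?_
    simp [eulerD_eq_zero hx, Real.zero_rpow hp0.ne']
  have hI := integrable_div_gauge hg hN hp1 hpN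
    (hu.continuous.abs.rpow_const fun _ => Or.inr hp0.le) hcI
  have hJ := integrable_div_gauge hg hN hp1 hpN
    ((eulerD_continuous hu).abs.rpow_const fun _ => Or.inr hp0.le) hcJ
  have hK := integrable_div_gauge hg hN hp1 hpN (hardyK_continuous hp1 hu) hcK
  have hmain := hardy_mul_bound hg hN hp1 hpN hu hc
  have hgp : ∀ x, 0 ≤ g x ^ p := fun x => Real.rpow_nonneg (hg.nonneg x) p
  set c : ℝ := (N - p) / p with hcdef
  have hc0 : 0 < c := div_pos (by linarith) hp0
  have hcp : (N : ℝ) - p = p * c := by rw [hcdef]; field_simp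
  -- the defect in Young's inequality for `c |u|` and `|x · ∇u|`, weighted
  set D : Euc N → ℝ := fun x => (p - 1) * c ^ p * (|u x| ^ p / g x ^ p)
    + |eulerD u x| ^ p / g x ^ p - c ^ (p - 1) * (hardyK p u x / g x ^ p) with hD
  have hDi : Integrable D := ((hI.const_mul _).add hJ).sub (hK.const_mul _)
  have hDeq : ∀ x, D x = ((p - 1) * (c * |u x|) ^ p + |eulerD u x| ^ p -
      p * (c * |u x|) ^ (p - 1) * |eulerD u x|) / g x ^ p := by
    intro x
    rw [hD]
    simp only [hardyK]
    rw [Real.mul_rpow hc0.le (abs_nonneg _), Real.mul_rpow hc0.le (abs_nonneg _)]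
    ring
  have hD0 : ∀ x, 0 ≤ D x := by
    intro x
    rw [hDeq]
    exact div_nonneg (sub_nonneg.2 (young_le hp1 (by positivity) (abs_nonneg _))) (hgp x)
  have hDint : ∫ x, D x = (p - 1) * c ^ p * (∫ x, |u x| ^ p / g x ^ p)
      + (∫ x, |eulerD u x| ^ p / g x ^ p) - c ^ (p - 1) * ∫ x, hardyK p u x / g x ^ p := by
    have e1 := integral_sub ((hI.const_mul ((p - 1) * c ^ p)).add hJ) (hK.const_mul (c ^ (p - 1)))
    have e2 := integral_add (hI.const_mul ((p - 1) * c ^ p)) hJ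
    rw [integral_const_mul] at e1 e2
    exact e1.trans (congrArg₂ (· - ·) e2 rfl)
  have hcc : c ^ (p - 1) * c = c ^ p := by
    rw [← Real.rpow_add_one hc0.ne']; congr 1; ring
  have hup : ∫ x, D x ≤ (∫ x, |eulerD u x| ^ p / g x ^ p)
      - c ^ p * ∫ x, |u x| ^ p / g x ^ p := by
    have h1 := mul_le_mul_of_nonneg_left hmain (Real.rpow_nonneg hc0.le (p - 1))
    rw [hcp, ← mul_assoc] at h1
    have h2 : c ^ (p - 1) * (p * c) = p * c ^ p := by rw [← hcc]; ring
    rw [h2] at h1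
    rw [hDint]
    linarith
  refine ⟨?_, ?_, fun hp => ?_⟩
  · rw [integral_pos_iff_support_of_nonneg
      (fun x => div_nonneg (by positivity) (hgp x)) hI]
    have hopen : IsOpen (Function.support u) := hu.continuous.isOpen_support
    have hpos : 0 < volume (Function.support u \ {0}) := by
      rw [measure_sdiff_null (measure_singleton _)]
      exact hopen.measure_pos _ (Function.support_nonempty_iff.2 hne)
    refine hpos.trans_le (measure_mono ?_)
    rintro x ⟨hx, hx0⟩
    have := hg.pos hx0
    have h2 : 0 < |u x| := abs_pos.2 hx
    exact (by positivity : 0 < |u x| ^ p / g x ^ p).ne'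
  · have := integral_nonneg (μ := volume) (f := D) hD0
    linarith
  · by_contra hcon
    have hz : ∫ x, D x = 0 := le_antisymm (by linarith) (integral_nonneg hD0)
    rw [integral_eq_zero_iff_of_nonneg hD0 hDi] at hz
    have hae : (fun x => |eulerD u x|) =ᵐ[volume] fun x => c * |u x| := by
      filter_upwards [hz, compl_mem_ae_iff.2 (measure_singleton (0 : Euc N))] with x hx hx0
      by_contra hne'
      have h1 := young_strict hp (by positivity : 0 ≤ c * |u x|) (abs_nonneg (eulerD u x)) hne'
      have h2 : 0 < g x ^ p := Real.rpow_pos_of_pos (hg.pos hx0) p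
      have h3 : 0 < D x := by
        rw [hDeq]; exact div_pos (sub_pos.2 h1) h2
      exact h3.ne' hx
    have heq := Continuous.ae_eq_iff_eq volume (eulerD_continuous hu).abs
      (continuous_const.mul hu.continuous.abs) |>.1 hae
    exact hne (eq_zero_of_eulerD_eq hu hc hc0 fun x => congrFun heq x)

/-! ### Polar coordinates and the test functions -/

/-- Polar coordinates in logarithmic scale, with a factor `h` homogeneous of degree zero. -/
lemma integral_polar {N : ℕ} (hN : 2 ≤ N) {h : Euc N → ℝ}
    (hh : ∀ t : ℝ, 0 < t → ∀ x, h (t • x) = h x) (ψ : ℝ → ℝ) :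
    ∫ x : Euc N, ‖x‖ ^ (-(N : ℝ)) * ψ (Real.log ‖x‖) * h x =
      (∫ ω : Metric.sphere (0 : Euc N) 1, h ω ∂(volume : Measure (Euc N)).toSphere) *
        ∫ s, ψ s := by
  have : Nonempty (Fin N) := ⟨⟨0, by omega⟩⟩
  set f : ℝ → ℝ := fun r => r ^ (-(N : ℝ)) * ψ (Real.log r) with hf
  have hdim : Module.finrank ℝ (Euc N) = N := by simp
  have hexp : ∫ s, ψ s = ∫ r in Ioi (0 : ℝ), r ^ (N - 1) • f r := by
    have h1 := integral_image_eq_integral_abs_deriv_smul (s := univ) (f := Real.exp)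
      (f' := Real.exp) MeasurableSet.univ (fun x _ => (Real.hasDerivAt_exp x).hasDerivWithinAt)
      Real.exp_injective.injOn (fun r => r ^ (N - 1) • f r)
    rw [image_univ, Real.range_exp] at h1
    rw [h1, setIntegral_univ]
    congr 1 with s
    have hs := Real.exp_pos s
    simp only [hf, smul_eq_mul, Real.log_exp, abs_of_pos hs]
    have h2 : Real.exp s * Real.exp s ^ (N - 1) * Real.exp s ^ (-(N : ℝ)) = 1 := by
      rw [← pow_succ', Nat.sub_add_cancel (by omega), Real.rpow_neg hs.le, Real.rpow_natCast,
        mul_inv_cancel₀ (by positivity)]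
    linear_combination (-ψ s) * h2
  calc ∫ x : Euc N, f ‖x‖ * h x
      = ∫ x : ({0}ᶜ : Set (Euc N)), f ‖x.1‖ * h x.1 ∂((volume : Measure (Euc N)).comap Subtype.val) := by
        rw [integral_subtype_comap (measurableSet_singleton _).compl fun x => f ‖x‖ * h x,
          restrict_compl_singleton]
    _ = ∫ z, h z.1 * f z.2 ∂(volume : Measure (Euc N)).toSphere.prod
          (.volumeIoiPow (Module.finrank ℝ (Euc N) - 1)) := by
        rw [← (volume : Measure (Euc N)).measurePreserving_homeomorphUnitSphereProd.integral_comp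
          (Homeomorph.measurableEmbedding _) (g := fun z => h z.1 * f z.2)]
        refine integral_congr_ae (Eventually.of_forall fun x => ?_)
        have hx : 0 < ‖x.1‖ := norm_pos_iff.2 x.2
        simp only [homeomorphUnitSphereProd_apply_fst_coe,
          homeomorphUnitSphereProd_apply_snd_coe]
        rw [hh _ (by positivity), mul_comm]
    _ = (∫ ω, h ω ∂(volume : Measure (Euc N)).toSphere) *
          ∫ r, f r.1 ∂(.volumeIoiPow (Module.finrank ℝ (Euc N) - 1)) :=
        integral_prod_mul (fun ω : Metric.sphere (0 : Euc N) 1 => h ω)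
          (fun r : Ioi (0 : ℝ) => f r)
    _ = _ := by
        rw [hexp, hdim]
        congr 1
        simp only [Measure.volumeIoiPow, ENNReal.ofReal]
        rw [integral_withDensity_eq_integral_smul
            (measurable_subtype_coe.pow_const _).real_toNNReal,
          integral_subtype_comap measurableSet_Ioi fun a => Real.toNNReal (a ^ (N - 1)) • f a]
        refine setIntegral_congr_fun measurableSet_Ioi fun r hr => ?_
        have hr0 : 0 < r := hr
        simp only [NNReal.smul_def, Real.coe_toNNReal _ (pow_nonneg hr0.le _)]

/-- A fixed bump function on `ℝ`, supported in `(-5, -1)`. -/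
def chi : ContDiffBump (-3 : ℝ) := ⟨1, 2, one_pos, one_lt_two⟩

lemma chi_zero {s : ℝ} (hs : s ≤ -5 ∨ -1 ≤ s) : chi s = 0 := by
  refine chi.zero_of_le_dist ?_
  show (2 : ℝ) ≤ dist s (-3)
  rw [Real.dist_eq]
  rcases hs with hs | hs
  · rw [abs_of_nonpos] <;> linarith
  · rw [abs_of_nonneg] <;> linarith

lemma chi_hasDerivAt (s : ℝ) : HasDerivAt chi (deriv chi s) s :=
  ((chi.contDiff (n := 1)).differentiable (by simp) s).hasDerivAt

lemma chi_deriv_zero {s : ℝ} (hs : s ∉ Icc (-5 : ℝ) (-1)) : deriv chi s = 0 := by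
  have h : chi =ᶠ[𝓝 s] fun _ => (0 : ℝ) := by
    filter_upwards [isClosed_Icc.isOpen_compl.mem_nhds hs] with t ht
    refine chi_zero ?_
    by_contra hcon
    push Not at hcon
    exact ht ⟨hcon.1.le, hcon.2.le⟩
  rw [h.deriv_eq]
  simp

/-- The test function `|x|^(-c) χ(ε log |x|)`, a truncation of the virtual extremal `|x|^(-c)`.
It vanishes at the origin, where `Real.log 0 = 0` lies outside the support of `χ`. -/
def testFn {N : ℕ} (c ε : ℝ) (x : Euc N) : ℝ := ‖x‖ ^ (-c) * chi (ε * Real.log ‖x‖)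

lemma testFn_contDiff {N : ℕ} (c : ℝ) {ε : ℝ} (hε : 0 < ε) :
    ContDiff ℝ (⊤ : ℕ∞) (testFn (N := N) c ε) := by
  rw [contDiff_iff_contDiffAt]
  intro x
  rcases eq_or_ne x 0 with rfl | hx
  · have h : testFn (N := N) c ε =ᶠ[𝓝 0] fun _ => (0 : ℝ) := by
      filter_upwards [Metric.ball_mem_nhds (0 : Euc N) (Real.exp_pos (-5 / ε))] with y hy
      rw [mem_ball_zero_iff] at hy
      unfold testFn
      rcases eq_or_ne y 0 with rfl | hy0
      · rw [norm_zero, Real.log_zero, mul_zero, chi_zero (Or.inr (by norm_num)), mul_zero]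
      · have h1 := (Real.log_lt_iff_lt_exp (norm_pos_iff.2 hy0)).2 hy
        rw [lt_div_iff₀' hε] at h1
        rw [chi_zero (Or.inl h1.le), mul_zero]
    exact contDiffAt_const.congr_of_eventuallyEq h
  · have hx' := norm_pos_iff.2 hx
    have h1 : ContDiffAt ℝ (⊤ : ℕ∞) (fun y : Euc N => ‖y‖) x := contDiffAt_norm ℝ hx
    refine (h1.rpow_const_of_ne hx'.ne').mul ?_
    exact chi.contDiff.contDiffAt.comp x (contDiffAt_const.mul (h1.log hx'.ne'))

lemma testFn_tsupport {N : ℕ} (c : ℝ) {ε : ℝ} (hε : 0 < ε) :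
    tsupport (testFn (N := N) c ε) ⊆ Metric.closedBall 0 (Real.exp (-1 / ε)) := by
  refine closure_minimal (fun x hx => ?_) Metric.isClosed_closedBall
  rw [mem_closedBall_zero_iff]
  by_contra hcon
  push Not at hcon
  have hx' : 0 < ‖x‖ := (Real.exp_pos _).trans hcon
  have h1 := (Real.lt_log_iff_exp_lt hx').2 hcon
  rw [div_lt_iff₀' hε] at h1
  exact hx (by simp [testFn, chi_zero (Or.inr h1.le)])

lemma testFn_ne_zero {N : ℕ} (hN : 2 ≤ N) (c : ℝ) {ε : ℝ} (hε : 0 < ε) :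
    testFn (N := N) c ε ≠ 0 := by
  have : Nonempty (Fin N) := ⟨⟨0, by omega⟩⟩
  obtain ⟨x, hx⟩ := exists_norm_eq (Euc N) (Real.exp_pos (-3 / ε)).le
  intro h
  have h1 := congrFun h x
  have hpos := Real.exp_pos (-3 / ε)
  have h2 : chi (-3) = 1 := chi.one_of_mem_closedBall (by simp [chi])
  rw [testFn, hx, Real.log_exp, mul_div_cancel₀ _ hε.ne', h2, mul_one] at h1
  exact (Real.rpow_pos_of_pos hpos (-c)).ne' h1

lemma eulerD_testFn {N : ℕ} (c : ℝ) {ε : ℝ} (hε : 0 < ε) {x : Euc N} (hx : x ≠ 0) :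
    eulerD (testFn c ε) x = ‖x‖ ^ (-c) *
      (ε * deriv chi (ε * Real.log ‖x‖) - c * chi (ε * Real.log ‖x‖)) := by
  have hx' := norm_pos_iff.2 hx
  have h1 := hasDerivAt_ray (testFn_contDiff (N := N) c hε) x one_ne_zero
  rw [one_smul, div_one] at h1
  have h2 : HasDerivAt (fun s : ℝ => s * ‖x‖) ‖x‖ 1 := by
    simpa using (hasDerivAt_id (1 : ℝ)).mul_const ‖x‖
  have h3 : HasDerivAt (fun s : ℝ => (s * ‖x‖) ^ (-c)) (‖x‖ * (-c) * (1 * ‖x‖) ^ (-c - 1)) 1 :=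
    h2.rpow_const (Or.inl (by simpa using hx'.ne'))
  have h4 : HasDerivAt (fun s : ℝ => ε * Real.log (s * ‖x‖)) (ε * (‖x‖ / (1 * ‖x‖))) 1 :=
    (h2.log (by simpa using hx'.ne')).const_mul ε
  have h5 := h3.mul ((chi_hasDerivAt _).comp 1 h4)
  have h6 : (fun s : ℝ => testFn c ε (s • x)) =ᶠ[𝓝 1]
      ((fun s : ℝ => (s * ‖x‖) ^ (-c)) * (chi ∘ fun s : ℝ => ε * Real.log (s * ‖x‖))) := by
    filter_upwards [lt_mem_nhds (zero_lt_one' ℝ)] with s hs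
    simp [testFn, norm_smul, abs_of_pos hs]
  have h7 := h1.unique (h5.congr_of_eventuallyEq h6)
  rw [h7]
  simp only [one_mul, Function.comp_apply, div_self hx'.ne', mul_one]
  rw [Real.rpow_sub_one hx'.ne']
  field_simp
  ring

lemma testFn_integrals {N : ℕ} {g : Euc N → ℝ} (hg : IsGauge g) {p : ℝ} (hN : 2 ≤ N)
    (hp1 : 1 ≤ p) {ε : ℝ} (hε : 0 < ε) :
    ∃ A : ℝ, (∫ x, |testFn ((N - p) / p) ε x| ^ p / g x ^ p = A * ∫ s, |chi s| ^ p) ∧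
      (∫ x, |eulerD (testFn ((N - p) / p) ε) x| ^ p / g x ^ p =
        A * ∫ s, |ε * deriv chi s - (N - p) / p * chi s| ^ p) := by
  have : Nonempty (Fin N) := ⟨⟨0, by omega⟩⟩
  set c : ℝ := (N - p) / p with hc
  have hp0 : 0 < p := by linarith
  have hcp : -c * p = -(N : ℝ) + p := by rw [hc]; field_simp; ring
  set h : Euc N → ℝ := fun x => (‖x‖ / g x) ^ p with hh
  have hhom : ∀ t : ℝ, 0 < t → ∀ x, h (t • x) = h x := by
    intro t ht x
    simp only [hh]
    rw [hg.smul t ht, norm_smul, Real.norm_of_nonneg ht.le, mul_div_mul_left _ _ ht.ne']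
  have halg : ∀ (x : Euc N) (y : ℝ), x ≠ 0 → |‖x‖ ^ (-c) * y| ^ p / g x ^ p =
      ‖x‖ ^ (-(N : ℝ)) * |y| ^ p * h x := by
    intro x y hx
    have hx' := norm_pos_iff.2 hx
    simp only [hh]
    rw [abs_mul, abs_of_pos (Real.rpow_pos_of_pos hx' _), Real.mul_rpow (by positivity)
      (abs_nonneg _), ← Real.rpow_mul hx'.le, hcp, Real.rpow_add hx', Real.div_rpow hx'.le
      (hg.nonneg x)]
    ring
  refine ⟨(∫ ω : Metric.sphere (0 : Euc N) 1, h ω ∂(volume : Measure (Euc N)).toSphere) * ε⁻¹,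
    ?_, ?_⟩
  · have h1 := integral_polar hN hhom (fun s => |chi (ε * s)| ^ p)
    rw [Measure.integral_comp_mul_left (fun s => |chi s| ^ p) ε, abs_of_pos (by positivity),
      smul_eq_mul, ← mul_assoc] at h1
    rw [← h1]
    refine integral_congr_ae ?_
    filter_upwards [compl_mem_ae_iff.2 (measure_singleton (0 : Euc N))] with x hx
    exact halg x _ hx
  · have h1 := integral_polar hN hhom
      (fun s => |ε * deriv chi (ε * s) - c * chi (ε * s)| ^ p)
    rw [Measure.integral_comp_mul_left (fun s => |ε * deriv chi s - c * chi s| ^ p) ε,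
      abs_of_pos (by positivity), smul_eq_mul, ← mul_assoc] at h1
    rw [← h1]
    refine integral_congr_ae ?_
    filter_upwards [compl_mem_ae_iff.2 (measure_singleton (0 : Euc N))] with x hx
    rw [eulerD_testFn c hε hx]
    exact halg x _ hx

lemma tendsto_numerator {p c : ℝ} (hp1 : 1 ≤ p) (hc : 0 < c) :
    Tendsto (fun ε : ℝ => ∫ s, |ε * deriv chi s - c * chi s| ^ p) (𝓝[>] 0)
      (𝓝 (c ^ p * ∫ s, |chi s| ^ p)) := by
  have hp0 : 0 < p := by linarith
  have hd : Continuous (deriv chi) := (chi.contDiff (n := 1)).continuous_deriv (by simp)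
  have hcont : Continuous fun ε : ℝ =>
      ∫ s in Icc (-5 : ℝ) (-1), |ε * deriv chi s - c * chi s| ^ p := by
    refine continuous_parametric_integral_of_continuous ?_ isCompact_Icc
    have h1 : Continuous fun z : ℝ × ℝ => z.1 * deriv chi z.2 - c * chi z.2 :=
      (continuous_fst.mul (hd.comp continuous_snd)).sub
        (continuous_const.mul (chi.continuous.comp continuous_snd))
    exact h1.abs.rpow_const fun _ => Or.inr hp0.le
  have heq : (fun ε : ℝ => ∫ s, |ε * deriv chi s - c * chi s| ^ p) = fun ε : ℝ =>
      ∫ s in Icc (-5 : ℝ) (-1), |ε * deriv chi s - c * chi s| ^ p := by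
    funext ε
    refine (setIntegral_eq_integral_of_forall_compl_eq_zero fun s hs => ?_).symm
    have h1 : chi s = 0 := chi_zero (by
      by_contra hcon
      push Not at hcon
      exact hs ⟨hcon.1.le, hcon.2.le⟩)
    simp [chi_deriv_zero hs, h1, Real.zero_rpow hp0.ne']
  have hval : c ^ p * ∫ s, |chi s| ^ p = ∫ s, |0 * deriv chi s - c * chi s| ^ p := by
    rw [← integral_const_mul]
    congr 1 with s
    rw [zero_mul, zero_sub, abs_neg, abs_mul, abs_of_pos hc, Real.mul_rpow hc.le (abs_nonneg _)]
  rw [hval]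
  have := (heq ▸ hcont).tendsto 0
  exact this.mono_left nhdsWithin_le_nhds

/-! ### The best constant -/

lemma hardy_setIntegrals {N : ℕ} {g : Euc N → ℝ} (hg : IsGauge g) {p : ℝ}
    (hp1 : 1 ≤ p) {Ω : Set (Euc N)} {u : Euc N → ℝ} (hu : IsTestFun Ω u) :
    (∫ x in Ω, |⟪(g x)⁻¹ • x, gradient u x⟫| ^ p = ∫ x, |eulerD u x| ^ p / g x ^ p) ∧
    (∫ x in Ω, |u x| ^ p / g x ^ p = ∫ x, |u x| ^ p / g x ^ p) := by
  have hp0 : p ≠ 0 := by linarith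
  have hpt : ∀ x, |⟪(g x)⁻¹ • x, gradient u x⟫| ^ p = |eulerD u x| ^ p / g x ^ p := by
    intro x
    rw [real_inner_smul_left, inner_gradient_right, abs_mul,
      abs_of_nonneg (inv_nonneg.2 (hg.nonneg x)), Real.mul_rpow (inv_nonneg.2 (hg.nonneg x))
      (abs_nonneg _), Real.inv_rpow (hg.nonneg x), inv_mul_eq_div]
    rfl
  simp only [hpt]
  constructor
  · refine setIntegral_eq_integral_of_forall_compl_eq_zero fun x hx => ?_
    rw [eulerD_eq_zero fun h => hx (hu.2.2 h), abs_zero, Real.zero_rpow hp0, zero_div]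
  · refine setIntegral_eq_integral_of_forall_compl_eq_zero fun x hx => ?_
    rw [image_eq_zero_of_notMem_tsupport fun h => hx (hu.2.2 h), abs_zero, Real.zero_rpow hp0,
      zero_div]

/-- The test functions concentrate at the origin, so they are admissible for small `ε`, and their
quotients tend to the Hardy constant. -/
lemma exists_quotient_lt {N : ℕ} {g : Euc N → ℝ} (hg : IsGauge g) {p : ℝ} (hN : 2 ≤ N)
    (hp1 : 1 ≤ p) (hpN : p < N) {Ω : Set (Euc N)} (hΩ : IsOpen Ω) (h0 : 0 ∈ Ω) {q : ℝ}
    (hq : ((N - p) / p) ^ p < q) :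
    ∃ u : Euc N → ℝ, IsTestFun Ω u ∧ u ≠ 0 ∧
      (∫ x, |eulerD u x| ^ p / g x ^ p) / (∫ x, |u x| ^ p / g x ^ p) < q := by
  have hc : 0 < (N - p) / p := div_pos (by linarith) (by linarith)
  obtain ⟨R, hR, hRΩ⟩ := Metric.isOpen_iff.1 hΩ 0 h0
  have hsupp : ∀ {ε : ℝ}, 0 < ε → HasCompactSupport (testFn (N := N) ((N - p) / p) ε) :=
    fun hε => HasCompactSupport.of_support_subset_isCompact (isCompact_closedBall _ _)
      ((subset_tsupport _).trans (testFn_tsupport _ hε))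
  have hX : (∫ s, |chi s| ^ p) ≠ 0 := by
    obtain ⟨A, hA, -⟩ := testFn_integrals hg hN hp1 one_pos
    have h1 := (hardy_main hg hN hp1 hpN (testFn_contDiff ((N - p) / p) one_pos)
      (hsupp one_pos) (testFn_ne_zero hN _ one_pos)).1
    exact right_ne_zero_of_mul (hA ▸ h1).ne'
  have hlim := (tendsto_numerator hp1 hc).div_const (∫ s, |chi s| ^ p)
  rw [mul_div_cancel_right₀ _ hX] at hlim
  have hexp : ∀ᶠ ε : ℝ in 𝓝[>] 0, Real.exp (-1 / ε) < R := by
    have h1 : Tendsto (fun ε : ℝ => Real.exp (-1 / ε)) (𝓝[>] 0) (𝓝 0) := by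
      refine Real.tendsto_exp_atBot.comp ?_
      have := tendsto_neg_atTop_atBot.comp (tendsto_inv_nhdsGT_zero (𝕜 := ℝ))
      refine this.congr fun ε => ?_
      simp [div_eq_mul_inv]
    exact h1.eventually (gt_mem_nhds hR)
  obtain ⟨ε, ⟨hlt, hexpR⟩, hε⟩ := (((hlim.eventually (gt_mem_nhds hq)).and hexp).and
    self_mem_nhdsWithin).exists
  have hε : 0 < ε := hε
  obtain ⟨A, hA1, hA2⟩ := testFn_integrals hg hN hp1 hε
  have hpos := (hardy_main hg hN hp1 hpN (testFn_contDiff ((N - p) / p) hε) (hsupp hε)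
    (testFn_ne_zero hN _ hε)).1
  refine ⟨testFn ((N - p) / p) ε, ⟨testFn_contDiff _ hε, hsupp hε, (testFn_tsupport _ hε).trans
    ((Metric.closedBall_subset_ball hexpR).trans hRΩ)⟩, testFn_ne_zero hN _ hε, ?_⟩
  rw [hA1] at hpos
  rw [hA1, hA2, mul_div_mul_left _ _ (left_ne_zero_of_mul hpos.ne')]
  exact hlt

/-- The best constant in the anisotropic subcritical Hardy inequality on a domain
containing the origin is ((N-p)/p)^p, and for 1 < p < N it is not attained. -/
theorem finsler_hardy_subcritical_best_constant
    (N : ℕ) (hN : 2 ≤ N) (H : Euc N → ℝ) (hH : IsFinslerNorm H)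
    (p : ℝ) (hp1 : 1 ≤ p) (hpN : p < (N : ℝ))
    (Ω : Set (Euc N)) (hΩopen : IsOpen Ω) (hΩconn : IsConnected Ω) (h0 : 0 ∈ Ω) :
    sInf {r : ℝ | ∃ u : Euc N → ℝ, IsTestFun Ω u ∧ u ≠ 0 ∧
        r = (∫ x in Ω, |⟪(polarNorm H x)⁻¹ • x, gradient u x⟫| ^ p) /
            ∫ x in Ω, |u x| ^ p / polarNorm H x ^ p}
      = (((N : ℝ) - p) / p) ^ p ∧
    (1 < p → ∀ u : Euc N → ℝ, IsTestFun Ω u → u ≠ 0 →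
      (((N : ℝ) - p) / p) ^ p <
        (∫ x in Ω, |⟪(polarNorm H x)⁻¹ • x, gradient u x⟫| ^ p) /
          ∫ x in Ω, |u x| ^ p / polarNorm H x ^ p) := by
  have hg := polarNorm_isGauge hN hH
  have hfact : ∀ u : Euc N → ℝ, IsTestFun Ω u → u ≠ 0 → _ := fun u hu hne =>
    hardy_main hg hN hp1 hpN hu.1 hu.2.1 hne
  refine ⟨csInf_eq_of_forall_ge_of_forall_gt_exists_lt ?_ ?_ ?_, fun hp u hu hne => ?_⟩
  · obtain ⟨u, hu, hne, -⟩ := exists_quotient_lt hg hN hp1 hpN hΩopen h0 (lt_add_one _)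
    exact ⟨_, u, hu, hne, rfl⟩
  · rintro r ⟨u, hu, hne, rfl⟩
    obtain ⟨e1, e2⟩ := hardy_setIntegrals hg hp1 hu
    obtain ⟨hpos, hle, -⟩ := hfact u hu hne
    rw [e1, e2, le_div_iff₀ hpos]
    exact hle
  · intro q hq
    obtain ⟨u, hu, hne, hlt⟩ := exists_quotient_lt hg hN hp1 hpN hΩopen h0 hq
    obtain ⟨e1, e2⟩ := hardy_setIntegrals hg hp1 hu
    exact ⟨_, ⟨u, hu, hne, rfl⟩, by rw [e1, e2]; exact hlt⟩
  · obtain ⟨e1, e2⟩ := hardy_setIntegrals hg hp1 hu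
    obtain ⟨hpos, -, hlt⟩ := hfact u hu hne
    rw [e1, e2, lt_div_iff₀ hpos]
    exact hlt hp
end
end
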